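/- Let d ≥ 1 and let u : [0,∞) × ℝ^d → ℝ^d be smooth, ℤ^d-periodic in x, bounded on [0,T] × ℝ^d for every T > 0, and divergence-free in x. Suppose there is a function τ : (0,∞) → (0,∞) such that for every ν > 0, every s ≥ 0, and every smooth, ℤ^d-periodic-in-x, mean-zero solution θ of ∂_t θ − νΔθ + u·∇θ = 0 on [s,∞) × ℝ^d, one has ‖θ(s+τ(ν),·)‖_{L²} ≤ (1/2)‖θ(s,·)‖_{L²}, and suppose there exist constants C > 0 and p > 0 such that τ(ν) ≤ C|log ν|^{2/p} for all ν ∈ (0, 1/C]. Then the diffeomorphism σ in the total dissipation theorem can be chosen so that additionally there exists C' > 0 with σ'(t) ≤ C' (|log₂(1−t)|^{2+2/p} + 1)/(1−t) for all t ∈ [0,1). -/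

import Mathlib

open Real MeasureTheory Filter

/-- Spatial partial derivative in the `i`-th coordinate direction. -/
noncomputable def pd (d : ℕ) (i : Fin d) (f : (Fin d → ℝ) → ℝ) (x : Fin d → ℝ) : ℝ :=
  fderiv ℝ f x (Pi.single i 1)

/-- Spatial Laplacian: sum of second partial derivatives. -/
noncomputable def lap (d : ℕ) (f : (Fin d → ℝ) → ℝ) (x : Fin d → ℝ) : ℝ :=
  ∑ i, pd d i (fun y => pd d i f y) x

/-- The `L²` norm on the unit cell `[0,1]^d` of a `ℤ^d`-periodic function. -/
noncomputable def L2norm (d : ℕ) (f : (Fin d → ℝ) → ℝ) : ℝ :=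
  Real.sqrt (∫ x in Set.Icc (0 : Fin d → ℝ) 1, (f x) ^ 2)

/-- `ℤ^d`-periodicity. -/
def PeriodicIn (d : ℕ) (f : (Fin d → ℝ) → ℝ) : Prop :=
  ∀ x : Fin d → ℝ, ∀ k : Fin d → ℤ, f (x + fun i => (k i : ℝ)) = f x

/-!
The clock `σ` is built so that on a window of length comparable to `2^{-n}` around `1 - 2^{-n}` it
runs at the constant speed `A_n = 2^n (1 + n²)^{q/2}`, where `q = 2 + 2/p`. Rescaling time by `A_n`
turns the accelerated equation there into the original one with diffusivity `ν / A_n`. Its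
dissipation time is `O(|log (ν / A_n)|^{2/p}) = O(n^{2/p})`, while the window lasts for a multiple
of `n^q` in the original time. Hence the `L²` norm halves on every late window, and the energy
inequality keeps it from growing in between.

The dissipation time only concerns solutions which exist for all later times, whereas a window
provides one on a bounded interval. Cut off in time, such a solution solves a forced equation; with
the forcing switched off once the dissipation time has passed, that equation is solved for all
times. In Fourier variables, Duhamel's formula makes the latter a fixed point problem with rapidly
decaying coefficients, in which `v·∇θ = ∇·(vθ)` costs one derivative and the heat semigroup repays
it.
-/

section Development

open Set Topology

variable {d : ℕ}

/-! ### Periodic functions on space and space-time -/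

/-- The cell `[0,1]^d` over which `ℤ^d`-periodic functions are integrated. -/
abbrev unitCell (d : ℕ) : Set (Fin d → ℝ) := Icc 0 1

/-- Space-time `ℝ × ℝ^d`, time first. -/
abbrev SpaceTime (d : ℕ) : Type := ℝ × (Fin d → ℝ)

section Periodic

variable {F : Type*}

/-- `ℤ^d`-periodicity with values in an arbitrary type; `PeriodicIn` is the real-valued case. -/
def LatticePeriodic (f : (Fin d → ℝ) → F) : Prop :=
  ∀ x : Fin d → ℝ, ∀ k : Fin d → ℤ, f (x + fun i => (k i : ℝ)) = f x

theorem continuous_slice [TopologicalSpace F] {f : SpaceTime d → F} {I : Set ℝ} {t : ℝ}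
    (hf : ContinuousOn f (I ×ˢ univ)) (ht : t ∈ I) : Continuous fun x => f (t, x) :=
  continuousOn_univ.1 (hf.comp (by fun_prop) fun _ _ => ⟨ht, trivial⟩)

section Normed

variable [NormedAddCommGroup F] [NormedSpace ℝ F] {f g : SpaceTime d → F} {I : Set ℝ} {t : ℝ}

theorem contDiff_slice {n : WithTop ℕ∞} (hf : ContDiffOn ℝ n f (I ×ˢ univ)) (ht : t ∈ I) :
    ContDiff ℝ n fun x => f (t, x) :=
  contDiffOn_univ.1 (hf.comp (contDiff_prodMk_right t).contDiffOn fun _ _ => ⟨ht, trivial⟩)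

/-- The time derivative `∂_t f` of a function on space-time. -/
noncomputable def timeDeriv (f : SpaceTime d → F) (p : SpaceTime d) : F :=
  fderiv ℝ f p (1, 0)

/-- The partial derivative `∂_{x_i} f` of a function on space-time. -/
noncomputable def spaceDeriv (i : Fin d) (f : SpaceTime d → F) (p : SpaceTime d) : F :=
  fderiv ℝ f p (0, Pi.single i 1)

theorem hasDerivAt_timeDeriv {x : Fin d → ℝ} (hf : DifferentiableAt ℝ f (t, x)) :
    HasDerivAt (fun r => f (r, x)) (timeDeriv f (t, x)) t :=
  hf.hasFDerivAt.comp_hasDerivAt t ((hasDerivAt_id t).prodMk (hasDerivAt_const t x))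

theorem fderiv_slice_single {x : Fin d → ℝ} (hf : DifferentiableAt ℝ f (t, x)) (i : Fin d) :
    fderiv ℝ (fun y => f (t, y)) x (Pi.single i 1) = spaceDeriv i f (t, x) := by
  have h := hf.hasFDerivAt.comp x (hasFDerivAt_prodMk_right t x)
  exact DFunLike.congr_fun h.fderiv (Pi.single i 1)

/-- Smooth functions on space-time that are `ℤ^d`-periodic in space. -/
structure SmoothPeriodic (f : SpaceTime d → F) : Prop where
  contDiff : ContDiff ℝ (⊤ : ℕ∞) f
  periodic : ∀ t, LatticePeriodic fun x => f (t, x)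

namespace SmoothPeriodic

theorem differentiable (hf : SmoothPeriodic f) : Differentiable ℝ f :=
  hf.contDiff.differentiable (by simp)

theorem contDiff_slice (hf : SmoothPeriodic f) (t : ℝ) : ContDiff ℝ (⊤ : ℕ∞) fun x => f (t, x) :=
  hf.contDiff.comp (contDiff_prodMk_right t)

theorem fderiv_apply (hf : SmoothPeriodic f) (v : SpaceTime d) :
    SmoothPeriodic fun p => fderiv ℝ f p v where
  contDiff := (hf.contDiff.fderiv_right (m := (⊤ : ℕ∞)) (by simp)).clm_apply contDiff_const
  periodic t x k := by
    have hshift : (fun p : SpaceTime d => f (p + (0, fun i => (k i : ℝ)))) = f := by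
      funext ⟨r, y⟩
      simpa only [Prod.mk_add_mk, add_zero] using hf.periodic r y k
    have := congrArg (fun g => fderiv ℝ g (t, x) v) hshift
    simpa only [fderiv_comp_add_right, Prod.mk_add_mk, add_zero] using this

theorem timeDeriv (hf : SmoothPeriodic f) : SmoothPeriodic (timeDeriv f) :=
  hf.fderiv_apply _

theorem spaceDeriv (hf : SmoothPeriodic f) (i : Fin d) : SmoothPeriodic (spaceDeriv i f) :=
  hf.fderiv_apply _

theorem ofReal {f : SpaceTime d → ℝ} (hf : SmoothPeriodic f) :
    SmoothPeriodic fun p => (f p : ℂ) where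
  contDiff := Complex.ofRealCLM.contDiff.comp hf.contDiff
  periodic t x k := congrArg Complex.ofReal (hf.periodic t x k)

theorem mul {f g : SpaceTime d → ℝ} (hf : SmoothPeriodic f) (hg : SmoothPeriodic g) :
    SmoothPeriodic fun p => f p * g p where
  contDiff := hf.contDiff.mul hg.contDiff
  periodic t x k := congrArg₂ (· * ·) (hf.periodic t x k) (hg.periodic t x k)

end SmoothPeriodic

theorem integral_fderiv_single_eq_zero {f : (Fin d → ℝ) → F}
    (hf : ContDiff ℝ 1 f) (hper : LatticePeriodic f) (i : Fin d) :
    ∫ x in unitCell d, fderiv ℝ f x (Pi.single i 1) = 0 := by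
  obtain _ | n := d
  · exact i.elim0
  have hdiv : (fun x => ∑ j, (if j = i then fderiv ℝ f x else 0) (Pi.single j 1)) =
      fun x => fderiv ℝ f x (Pi.single i 1) := by
    funext x
    rw [Finset.sum_eq_single i (fun j _ hj => by simp [hj]) (by simp), if_pos rfl]
  have hcont : Continuous fun x => fderiv ℝ f x (Pi.single i 1) :=
    (hf.continuous_fderiv one_ne_zero).clm_apply continuous_const
  have hflux := integral_divergence_of_hasFDerivAt_off_countable' (0 : Fin (n + 1) → ℝ) 1
    (fun _ => zero_le_one) (fun j => if j = i then f else 0)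
    (fun j x => if j = i then fderiv ℝ f x else 0) ∅ countable_empty
    (fun j => by
      split_ifs
      exacts [hf.continuous.continuousOn, continuousOn_const])
    (fun x _ j => by
      split_ifs
      exacts [(hf.differentiable one_ne_zero x).hasFDerivAt, hasFDerivAt_const _ _])
    (by rw [hdiv]; exact hcont.integrableOn_Icc)
  rw [hdiv] at hflux
  rw [hflux]
  refine Finset.sum_eq_zero fun j _ => ?_
  split_ifs with hj
  · subst hj
    refine sub_eq_zero.2 (congrArg _ (funext fun x => ?_))
    rw [← hper (j.insertNth ((0 : Fin (n + 1) → ℝ) j) x) (Pi.single j 1)]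
    congr 1
    funext l
    cases l using j.succAboveCases <;> simp
  · simp

theorem hasDerivAt_integral_unitCell (hI : IsOpen I) (hf : ContDiffOn ℝ 1 f (I ×ˢ univ))
    (ht : t ∈ I) :
    HasDerivAt (fun r => ∫ x in unitCell d, f (r, x))
      (∫ x in unitCell d, timeDeriv f (t, x)) t := by
  have hopen : IsOpen (I ×ˢ (univ : Set (Fin d → ℝ))) := hI.prod isOpen_univ
  have hderiv_cont : ContinuousOn (timeDeriv f) (I ×ˢ univ) :=
    (hf.continuousOn_fderiv_of_isOpen hopen le_rfl).clm_apply continuousOn_const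
  obtain ⟨ε, hε, hball⟩ := Metric.nhds_basis_closedBall.mem_iff.1 (hI.mem_nhds ht)
  obtain ⟨M, hM⟩ :=
    ((isCompact_closedBall t ε).prod (isCompact_Icc (a := (0 : Fin d → ℝ)) (b := 1)))
      |>.exists_bound_of_continuousOn
        (hderiv_cont.mono (prod_mono hball (subset_univ _)))
  refine (hasDerivAt_integral_of_dominated_loc_of_deriv_le (μ := volume.restrict (unitCell d))
    (F := fun r x => f (r, x)) (F' := fun r x => timeDeriv f (r, x))
    (bound := fun _ => M) (Metric.ball_mem_nhds t hε) ?_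
    (continuous_slice hf.continuousOn ht).integrableOn_Icc
    (continuous_slice hderiv_cont ht).aestronglyMeasurable
    ((ae_restrict_iff' measurableSet_Icc).2 <| ae_of_all _ fun x hx r hr =>
      hM (r, x) ⟨Metric.ball_subset_closedBall hr, hx⟩)
    continuous_const.integrableOn_Icc
    (ae_of_all _ fun x r hr => ?_)).2
  · filter_upwards [hI.mem_nhds ht] with r hr
    exact (continuous_slice hf.continuousOn hr).aestronglyMeasurable
  · have hr' : (r, x) ∈ I ×ˢ univ := ⟨hball (Metric.ball_subset_closedBall hr), trivial⟩
    exact hasDerivAt_timeDeriv ((hf.contDiffAt (hopen.mem_nhds hr')).differentiableAt one_ne_zero)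

end Normed

end Periodic

/-! ### Fourier series on the unit cell -/

/-- The symbol `2πi k_i` of the partial derivative `∂_{x_i}` on the `k`-th Fourier mode. -/
noncomputable def derivSymbol (i : Fin d) (k : Fin d → ℤ) : ℂ :=
  2 * π * Complex.I * k i

/-- The real-linear phase `x ↦ 2πi k·x` of the `k`-th Fourier mode. -/
noncomputable def latticePhase (k : Fin d → ℤ) : (Fin d → ℝ) →L[ℝ] ℂ :=
  ∑ i, (ContinuousLinearMap.proj (R := ℝ) (φ := fun _ => ℝ) i).smulRight (derivSymbol i k)

/-- The Fourier mode `x ↦ exp (2πi k·x)`. -/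
noncomputable def latticeExp (k : Fin d → ℤ) (x : Fin d → ℝ) : ℂ :=
  Complex.exp (latticePhase k x)

/-- The `k`-th Fourier coefficient of a `ℤ^d`-periodic function. -/
noncomputable def latticeCoeff (f : (Fin d → ℝ) → ℂ) (k : Fin d → ℤ) : ℂ :=
  ∫ x in unitCell d, f x * latticeExp (-k) x

/-- The weight `1 + |k|₁` that measures the decay of Fourier coefficients. -/
noncomputable def latticeWeight (k : Fin d → ℤ) : ℝ :=
  1 + ∑ i, |(k i : ℝ)|

theorem norm_derivSymbol (i : Fin d) (k : Fin d → ℤ) : ‖derivSymbol i k‖ = 2 * π * |(k i : ℝ)| := by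
  simp [derivSymbol, abs_of_pos pi_pos]

theorem latticePhase_apply (k : Fin d → ℤ) (x : Fin d → ℝ) :
    latticePhase k x = (2 * π * ∑ i, k i * x i : ℝ) * Complex.I := by
  simp only [latticePhase, derivSymbol, _root_.sum_apply,
    ContinuousLinearMap.smulRight_apply, ContinuousLinearMap.proj_apply, Complex.real_smul,
    Complex.ofReal_mul, Complex.ofReal_sum, Complex.ofReal_ofNat, Complex.ofReal_intCast,
    Finset.mul_sum, Finset.sum_mul]
  exact Finset.sum_congr rfl fun i _ => by ring

theorem latticePhase_single (k : Fin d → ℤ) (i : Fin d) :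
    latticePhase k (Pi.single i 1) = derivSymbol i k := by
  simp [latticePhase_apply, derivSymbol, Pi.single_apply, mul_right_comm]

theorem norm_latticeExp (k : Fin d → ℤ) (x : Fin d → ℝ) : ‖latticeExp k x‖ = 1 := by
  rw [latticeExp, latticePhase_apply, Complex.norm_exp_ofReal_mul_I]

theorem latticeExp_add (k j : Fin d → ℤ) (x : Fin d → ℝ) :
    latticeExp (k + j) x = latticeExp k x * latticeExp j x := by
  rw [latticeExp, latticeExp, latticeExp, ← Complex.exp_add]
  congr 1
  simp only [latticePhase_apply, Pi.add_apply, Int.cast_add, add_mul, Finset.sum_add_distrib,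
    mul_add, Complex.ofReal_add]

theorem latticeExp_periodic (k : Fin d → ℤ) : LatticePeriodic (latticeExp k) := fun x m => by
  rw [latticeExp, latticeExp, map_add, Complex.exp_eq_exp_iff_exists_int]
  refine ⟨∑ i, k i * m i, congrArg _ ?_⟩
  rw [latticePhase_apply]
  push_cast
  ring

theorem hasFDerivAt_latticeExp (k : Fin d → ℤ) (x : Fin d → ℝ) :
    HasFDerivAt (latticeExp k) (latticeExp k x • latticePhase k) x :=
  (latticePhase k).hasFDerivAt.cexp

theorem contDiff_latticeExp {n : WithTop ℕ∞} (k : Fin d → ℤ) : ContDiff ℝ n (latticeExp k) :=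
  (latticePhase k).contDiff.cexp

theorem mFourier_eq_latticeExp (k : Fin d → ℤ) (x : Fin d → ℝ) :
    UnitAddTorus.mFourier k (fun i => (x i : UnitAddCircle)) = latticeExp k x := by
  simp only [UnitAddTorus.mFourier, ContinuousMap.coe_mk, latticeExp, latticePhase_apply,
    Complex.ofReal_mul, Complex.ofReal_sum, Finset.mul_sum, Finset.sum_mul, Complex.exp_sum]
  refine Finset.prod_congr rfl fun i _ => ?_
  rw [fourier_coe_apply]
  congr 1
  push_cast
  ring

theorem LatticePeriodic.exists_continuousMap {f : (Fin d → ℝ) → ℂ} (hper : LatticePeriodic f)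
    (hf : Continuous f) :
    ∃ g : C(UnitAddTorus (Fin d), ℂ),
      ∀ x : Fin d → ℝ, g (fun i => (x i : UnitAddCircle)) = f x := by
  have hquot : IsOpenQuotientMap (Pi.map fun (_ : Fin d) (y : ℝ) => (y : UnitAddCircle)) :=
    .piMap fun _ => QuotientAddGroup.isOpenQuotientMap_mk
  have hfactor : ∀ x y : Fin d → ℝ, (∀ i, (x i : UnitAddCircle) = y i) → f x = f y := by
    intro x y hxy
    have hint : ∀ i, ∃ m : ℤ, x i = y i + m := fun i => by
      obtain ⟨m, hm⟩ := (AddCircle.coe_eq_zero_iff (1 : ℝ)).1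
        (show ((x i - y i : ℝ) : UnitAddCircle) = 0 by rw [AddCircle.coe_sub, hxy i, sub_self])
      exact ⟨m, by rw [zsmul_one] at hm; linarith⟩
    choose m hm using hint
    rw [← hper y m]
    exact congrArg f (funext hm)
  let g : UnitAddTorus (Fin d) → ℂ := fun y => f (Function.surjInv hquot.surjective y)
  have hg : ∀ x : Fin d → ℝ, g (fun i => (x i : UnitAddCircle)) = f x := fun x =>
    hfactor _ _ (congrFun (Function.surjInv_eq hquot.surjective fun i => (x i : UnitAddCircle)))
  refine ⟨⟨g, hquot.continuous_comp_iff.1 ?_⟩, hg⟩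
  convert hf using 1
  exact funext hg

theorem hasSum_latticeCoeff {f : (Fin d → ℝ) → ℂ} (hf : Continuous f) (hper : LatticePeriodic f)
    (hsum : Summable (latticeCoeff f)) (x : Fin d → ℝ) :
    HasSum (fun k => latticeCoeff f k * latticeExp k x) (f x) := by
  obtain ⟨g, hg⟩ := hper.exists_continuousMap hf
  have hcoeff : UnitAddTorus.mFourierCoeff g = latticeCoeff f := by
    funext k
    have hcell : {x : Fin d → ℝ | ∀ i, x i ∈ Ioc ((0 : Fin d → ℝ) i) ((0 : Fin d → ℝ) i + 1)} =
        univ.pi fun i => Ioc ((0 : Fin d → ℝ) i) ((1 : Fin d → ℝ) i) := by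
      ext x; simp
    rw [UnitAddTorus.mFourierCoeff_eq_integral g k 0, hcell, volume_pi,
      setIntegral_congr_set Measure.univ_pi_Ioc_ae_eq_Icc, latticeCoeff]
    simp only [hg, mFourier_eq_latticeExp, smul_eq_mul, mul_comm, volume_pi]
  rw [← hcoeff] at hsum ⊢
  have hseries := UnitAddTorus.hasSum_mFourier_series_apply_of_summable hsum
    (fun i => (x i : UnitAddCircle))
  simpa only [hg, mFourier_eq_latticeExp, smul_eq_mul] using hseries

theorem latticeCoeff_fderiv_single {f : (Fin d → ℝ) → ℂ} (hf : ContDiff ℝ 1 f)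
    (hper : LatticePeriodic f) (i : Fin d) (k : Fin d → ℤ) :
    latticeCoeff (fun x => fderiv ℝ f x (Pi.single i 1)) k =
      derivSymbol i k * latticeCoeff f k := by
  have hexp : ContDiff ℝ 1 (latticeExp (-k)) := contDiff_latticeExp (-k)
  have hproduct : ∀ x, fderiv ℝ (f * latticeExp (-k)) x (Pi.single i 1) =
      fderiv ℝ f x (Pi.single i 1) * latticeExp (-k) x
        - derivSymbol i k * (f x * latticeExp (-k) x) := fun x => by
    rw [((hf.differentiable one_ne_zero x).hasFDerivAt.mul (hasFDerivAt_latticeExp (-k) x)).fderiv]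
    simp only [add_apply, smul_apply, smul_eq_mul, latticePhase_single, derivSymbol, Pi.neg_apply,
      Int.cast_neg]
    ring
  have hzero := integral_fderiv_single_eq_zero (f := f * latticeExp (-k)) (hf.mul hexp)
    (fun x m => congrArg₂ (· * ·) (hper x m) (latticeExp_periodic (-k) x m)) i
  have hcont : Continuous fun x => fderiv ℝ f x (Pi.single i 1) :=
    (hf.continuous_fderiv one_ne_zero).clm_apply continuous_const
  rw [integral_congr_ae (ae_of_all _ hproduct), integral_sub, integral_const_mul, sub_eq_zero]
    at hzero
  · exact hzero
  · exact (hcont.mul hexp.continuous).integrableOn_Icc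
  · exact (continuous_const.mul (hf.continuous.mul hexp.continuous)).integrableOn_Icc

section Weight

variable (k j : Fin d → ℤ) (i : Fin d)

theorem one_le_latticeWeight : 1 ≤ latticeWeight k :=
  le_add_of_nonneg_right (Finset.sum_nonneg fun _ _ => abs_nonneg _)

theorem latticeWeight_pos : 0 < latticeWeight k :=
  one_pos.trans_le (one_le_latticeWeight k)

theorem one_add_abs_le_latticeWeight : 1 + |(k i : ℝ)| ≤ latticeWeight k :=
  add_le_add_right
    (Finset.single_le_sum (f := fun i => |(k i : ℝ)|) (fun _ _ => abs_nonneg _)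
      (Finset.mem_univ i)) 1

theorem latticeWeight_le_mul : latticeWeight k ≤ latticeWeight (k - j) * latticeWeight j := by
  have htriangle : ∑ i, |(k i : ℝ)| ≤ ∑ i, |((k - j) i : ℝ)| + ∑ i, |(j i : ℝ)| := by
    rw [← Finset.sum_add_distrib]
    exact Finset.sum_le_sum fun i _ => by simpa using abs_add_le (((k - j) i : ℤ) : ℝ) (j i)
  have hprod : 0 ≤ (∑ i, |((k - j) i : ℝ)|) * ∑ i, |(j i : ℝ)| := by positivity
  simp only [latticeWeight]
  linarith

end Weight

theorem summable_prod_pi {g : ℤ → ℝ} (hg : Summable g) (hnonneg : ∀ z, 0 ≤ g z) (n : ℕ) :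
    Summable fun k : Fin n → ℤ => ∏ i, g (k i) := by
  induction n with
  | zero => exact .of_finite
  | succ n ih =>
    rw [← (Fin.consEquiv fun _ : Fin (n + 1) => ℤ).summable_iff]
    refine (hg.mul_of_nonneg ih hnonneg fun k => Finset.prod_nonneg fun i _ => hnonneg _).congr
      fun x => ?_
    simp [Fin.prod_univ_succ, Fin.consEquiv_apply]

theorem summable_inv_one_add_abs_sq : Summable fun z : ℤ => ((1 + |(z : ℝ)|) ^ 2)⁻¹ := by
  refine .of_norm_bounded_eventually (Real.summable_one_div_int_pow.2 one_lt_two) ?_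
  filter_upwards [(finite_singleton (0 : ℤ)).compl_mem_cofinite] with z hz
  have hz' : (0 : ℝ) < |(z : ℝ)| := abs_pos.2 (Int.cast_ne_zero.2 hz)
  rw [norm_of_nonneg (by positivity), one_div, ← sq_abs (z : ℝ)]
  gcongr
  exact le_add_of_nonneg_left zero_le_one

theorem summable_inv_latticeWeight_pow :
    Summable fun k : Fin d → ℤ => (latticeWeight k ^ (2 * d))⁻¹ := by
  refine .of_nonneg_of_le (fun k => by have := latticeWeight_pos k; positivity) (fun k => ?_)
    (summable_prod_pi summable_inv_one_add_abs_sq (fun z => by positivity) d)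
  have hle : ∏ i, (1 + |(k i : ℝ)|) ≤ latticeWeight k ^ d := by
    simpa using Finset.prod_le_prod (s := .univ) (fun i _ => by positivity)
      fun i _ => one_add_abs_le_latticeWeight k i
  rw [Finset.prod_inv_distrib, Finset.prod_pow, mul_comm 2 d, pow_mul]
  gcongr

/-! ### Locally dominated series -/

section LocallyDominated

variable {ι X E : Type*} [NormedAddCommGroup X] [NormedAddCommGroup E]

/-- The hypothesis of the Weierstrass M-test on every ball around the origin. -/
def LocallyDominated (f : ι → X → E) : Prop :=
  ∀ R : ℝ, ∃ b : ι → ℝ, Summable b ∧ ∀ x, ‖x‖ ≤ R → ∀ i, ‖f i x‖ ≤ b i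

namespace LocallyDominated

variable {f : ι → X → E}

theorem add {g : ι → X → E} (hf : LocallyDominated f) (hg : LocallyDominated g) :
    LocallyDominated fun i x => f i x + g i x := fun R => by
  obtain ⟨b, hb, hfb⟩ := hf R
  obtain ⟨c, hc, hgc⟩ := hg R
  exact ⟨fun i => b i + c i, hb.add hc, fun x hx i => norm_add_le_of_le (hfb x hx i) (hgc x hx i)⟩

theorem sum {κ : Type*} {f : κ → ι → X → E} (s : Finset κ) (hf : ∀ j, LocallyDominated (f j)) :
    LocallyDominated fun i x => ∑ j ∈ s, f j i x := fun R => by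
  choose b hb hfb using fun j => hf j R
  exact ⟨fun i => ∑ j ∈ s, b j i, summable_sum fun j _ => hb j,
    fun x hx i => norm_sum_le_of_le s fun j _ => hfb j x hx i⟩

theorem clm_apply {E' : Type*} [NormedSpace ℝ E] [NormedAddCommGroup E'] [NormedSpace ℝ E']
    (hf : LocallyDominated f) (L : E →L[ℝ] E') :
    LocallyDominated fun i x => L (f i x) := fun R => by
  obtain ⟨b, hb, hfb⟩ := hf R
  exact ⟨fun i => ‖L‖ * b i, hb.mul_left _, fun x hx i => L.le_opNorm_of_le (hfb x hx i)⟩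

theorem summable_norm (hf : LocallyDominated f) (x : X) : Summable fun i => ‖f i x‖ := by
  obtain ⟨b, hb, hfb⟩ := hf ‖x‖
  exact hb.of_nonneg_of_le (fun _ => norm_nonneg _) (hfb x le_rfl)

theorem summable [CompleteSpace E] (hf : LocallyDominated f) (x : X) : Summable fun i => f i x :=
  (hf.summable_norm x).of_norm

theorem continuous_tsum [CompleteSpace E] (hf : LocallyDominated f)
    (hcont : ∀ i, Continuous (f i)) : Continuous fun x => ∑' i, f i x := by
  refine continuous_iff_continuousAt.2 fun x => ?_
  obtain ⟨b, hb, hfb⟩ := hf (‖x‖ + 1)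
  have hball : ContinuousOn (fun y => ∑' i, f i y) (Metric.ball 0 (‖x‖ + 1)) :=
    continuousOn_tsum (fun i => (hcont i).continuousOn) hb fun i y hy =>
      hfb y (mem_ball_zero_iff.1 hy).le i
  exact hball.continuousAt (Metric.isOpen_ball.mem_nhds (mem_ball_zero_iff.2 (lt_add_one _)))

theorem hasDerivAt_tsum [NormedSpace ℝ E] [CompleteSpace E] {f f' : ι → ℝ → E}
    (hf' : LocallyDominated f') (hderiv : ∀ i t, HasDerivAt (f i) (f' i t) t) {t : ℝ}
    (hsum : Summable fun i => f i t) :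
    HasDerivAt (fun s => ∑' i, f i s) (∑' i, f' i t) t := by
  obtain ⟨b, hb, hfb⟩ := hf' (‖t‖ + 1)
  have ht : t ∈ Metric.ball (0 : ℝ) (‖t‖ + 1) := mem_ball_zero_iff.2 (lt_add_one _)
  exact hasDerivAt_tsum_of_isPreconnected hb Metric.isOpen_ball
    (convex_ball (0 : ℝ) _).isPreconnected (fun i s _ => hderiv i s)
    (fun i s hs => hfb s (mem_ball_zero_iff.1 hs).le i) ht hsum ht

theorem hasFDerivAt_tsum [NormedSpace ℝ X] [NormedSpace ℝ E] [CompleteSpace E]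
    {f' : ι → X → X →L[ℝ] E} (hf' : LocallyDominated f')
    (hderiv : ∀ i x, HasFDerivAt (f i) (f' i x) x) {x : X} (hsum : Summable fun i => f i x) :
    HasFDerivAt (fun y => ∑' i, f i y) (∑' i, f' i x) x := by
  obtain ⟨b, hb, hfb⟩ := hf' (‖x‖ + 1)
  have hx : x ∈ Metric.ball (0 : X) (‖x‖ + 1) := mem_ball_zero_iff.2 (lt_add_one _)
  exact hasFDerivAt_tsum_of_isPreconnected hb Metric.isOpen_ball
    (convex_ball (0 : X) _).isPreconnected (fun i y _ => hderiv i y)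
    (fun i y hy => hfb y (mem_ball_zero_iff.1 hy).le i) hx hsum hx

end LocallyDominated

end LocallyDominated

/-! ### Rapidly decaying coefficient families -/

section Convolution

variable {a b : (Fin d → ℤ) → ℂ} {α : (Fin d → ℤ) → ℝ} {B : ℝ} {m : ℕ}

/-- Convolution of Fourier coefficients, the counterpart of the product of functions. -/
noncomputable def latticeConv (a b : (Fin d → ℤ) → ℂ) (k : Fin d → ℤ) : ℂ :=
  ∑' j, a (k - j) * b j

theorem weight_mul_norm_mul_le (ha : ∀ k, latticeWeight k ^ m * ‖a k‖ ≤ α k)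
    (hb : ∀ k, latticeWeight k ^ m * ‖b k‖ ≤ B) (k j : Fin d → ℤ) :
    latticeWeight k ^ m * ‖a (k - j) * b j‖ ≤ α (k - j) * B := by
  have hk := latticeWeight_pos k
  have hkj := latticeWeight_pos (k - j)
  have hj := latticeWeight_pos j
  calc latticeWeight k ^ m * ‖a (k - j) * b j‖
      ≤ (latticeWeight (k - j) * latticeWeight j) ^ m * (‖a (k - j)‖ * ‖b j‖) := by
        rw [norm_mul]
        gcongr
        exact latticeWeight_le_mul k j
    _ = (latticeWeight (k - j) ^ m * ‖a (k - j)‖) * (latticeWeight j ^ m * ‖b j‖) := by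
        rw [mul_pow, mul_mul_mul_comm]
    _ ≤ α (k - j) * B :=
        mul_le_mul (ha _) (hb _) (by positivity) ((by positivity : (0 : ℝ) ≤ _).trans (ha (k - j)))

theorem weight_mul_norm_latticeConv_le (hα : Summable α)
    (ha : ∀ k, latticeWeight k ^ m * ‖a k‖ ≤ α k)
    (hb : ∀ k, latticeWeight k ^ m * ‖b k‖ ≤ B) (k : Fin d → ℤ) :
    latticeWeight k ^ m * ‖latticeConv a b k‖ ≤ (∑' j, α j) * B := by
  have hmajorant : HasSum (fun j => α (k - j) * B) ((∑' j, α j) * B) :=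
    ((Equiv.subLeft k).hasSum_iff.2 hα.hasSum).mul_right B
  have hweight : ‖(latticeWeight k ^ m : ℂ)‖ = latticeWeight k ^ m := by
    rw [norm_pow, Complex.norm_real, norm_of_nonneg (latticeWeight_pos k).le]
  rw [latticeConv, ← hweight, ← norm_mul, ← tsum_mul_left]
  refine tsum_of_norm_bounded hmajorant fun j => ?_
  rw [norm_mul, hweight]
  exact weight_mul_norm_mul_le ha hb k j

end Convolution

/-- Time-dependent Fourier coefficients that are continuous in time and, locally uniformly in
time, decay faster than every power of the frequency. -/
structure RapidDecay (F : ℝ → (Fin d → ℤ) → ℂ) : Prop where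
  continuous (k : Fin d → ℤ) : Continuous fun t => F t k
  bound (T : ℝ) (m : ℕ) :
    ∃ A : ℝ, 0 ≤ A ∧ ∀ t, |t| ≤ T → ∀ k, latticeWeight k ^ m * ‖F t k‖ ≤ A

/-- Rapid decay of the coefficients together with their first `n` time derivatives. -/
def RapidDecayUpTo : ℕ → (ℝ → (Fin d → ℤ) → ℂ) → Prop
  | 0, F => RapidDecay F
  | n + 1, F => RapidDecay F ∧ ∃ F' : ℝ → (Fin d → ℤ) → ℂ,
      (∀ t k, HasDerivAt (fun s => F s k) (F' t k) t) ∧ RapidDecayUpTo n F'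

/-- Fourier multipliers growing at most polynomially in the frequency. -/
def PolynomialGrowth (a : (Fin d → ℤ) → ℂ) : Prop :=
  ∃ (B : ℝ) (q : ℕ), ∀ k, ‖a k‖ ≤ B * latticeWeight k ^ q

theorem polynomialGrowth_derivSymbol (i : Fin d) : PolynomialGrowth (derivSymbol i) :=
  ⟨2 * π, 1, fun k => by
    have := one_add_abs_le_latticeWeight k i
    rw [norm_derivSymbol, pow_one]
    gcongr
    linarith⟩

namespace RapidDecay

variable {F G : ℝ → (Fin d → ℤ) → ℂ}

theorem zero : RapidDecay fun (_ : ℝ) (_ : Fin d → ℤ) => (0 : ℂ) :=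
  ⟨fun _ => continuous_const, fun _ _ => ⟨0, le_rfl, fun _ _ _ => by simp⟩⟩

theorem add (hF : RapidDecay F) (hG : RapidDecay G) : RapidDecay fun t k => F t k + G t k := by
  refine ⟨fun k => (hF.continuous k).add (hG.continuous k), fun T m => ?_⟩
  obtain ⟨A, hA, hFA⟩ := hF.bound T m
  obtain ⟨B, hB, hGB⟩ := hG.bound T m
  refine ⟨A + B, add_nonneg hA hB, fun t ht k => ?_⟩
  have hk := latticeWeight_pos k
  calc latticeWeight k ^ m * ‖F t k + G t k‖
      ≤ latticeWeight k ^ m * ‖F t k‖ + latticeWeight k ^ m * ‖G t k‖ := by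
        rw [← mul_add]
        gcongr
        exact norm_add_le _ _
    _ ≤ A + B := add_le_add (hFA t ht k) (hGB t ht k)

theorem multiplier {a : (Fin d → ℤ) → ℂ} (hF : RapidDecay F) (ha : PolynomialGrowth a) :
    RapidDecay fun t k => a k * F t k := by
  obtain ⟨B, q, haB⟩ := ha
  have hB : 0 ≤ B := nonneg_of_mul_nonneg_left ((norm_nonneg _).trans (haB 0))
    (pow_pos (latticeWeight_pos 0) q)
  refine ⟨fun k => continuous_const.mul (hF.continuous k), fun T m => ?_⟩
  obtain ⟨A, hA, hFA⟩ := hF.bound T (m + q)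
  refine ⟨B * A, mul_nonneg hB hA, fun t ht k => ?_⟩
  have hk := latticeWeight_pos k
  calc latticeWeight k ^ m * ‖a k * F t k‖
      ≤ latticeWeight k ^ m * ((B * latticeWeight k ^ q) * ‖F t k‖) := by
        rw [norm_mul]
        gcongr
        exact haB k
    _ = B * (latticeWeight k ^ (m + q) * ‖F t k‖) := by rw [pow_add]; ring
    _ ≤ B * A := by gcongr; exact hFA t ht k

theorem exists_summable_bound (hF : RapidDecay F) (T : ℝ) (m : ℕ) :
    ∃ α : (Fin d → ℤ) → ℝ, Summable α ∧
      ∀ t, |t| ≤ T → ∀ k, latticeWeight k ^ m * ‖F t k‖ ≤ α k := by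
  obtain ⟨A, -, hFA⟩ := hF.bound T (m + 2 * d)
  refine ⟨fun k => A * (latticeWeight k ^ (2 * d))⁻¹, summable_inv_latticeWeight_pow.mul_left A,
    fun t ht k => ?_⟩
  have hk := latticeWeight_pos k
  beta_reduce
  rw [← div_eq_mul_inv, le_div_iff₀ (by positivity), mul_right_comm, ← pow_add]
  exact hFA t ht k

theorem locallyDominated_conv (hF : RapidDecay F) (hG : RapidDecay G) (k : Fin d → ℤ) :
    LocallyDominated fun j t => F t (k - j) * G t j := fun T => by
  obtain ⟨α, hα, hFα⟩ := hF.exists_summable_bound T 0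
  obtain ⟨B, -, hGB⟩ := hG.bound T 0
  refine ⟨fun j => α (k - j) * B, ((Equiv.subLeft k).summable_iff.2 hα).mul_right B,
    fun t ht j => ?_⟩
  simpa using weight_mul_norm_mul_le (hFα t ht) (hGB t ht) k j

theorem conv (hF : RapidDecay F) (hG : RapidDecay G) :
    RapidDecay fun t => latticeConv (F t) (G t) := by
  refine ⟨fun k => (hF.locallyDominated_conv hG k).continuous_tsum fun j =>
    (hF.continuous _).mul (hG.continuous j), fun T m => ?_⟩
  obtain ⟨α, hα, hFα⟩ := hF.exists_summable_bound T m
  obtain ⟨B, -, hGB⟩ := hG.bound T m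
  refine ⟨max 0 ((∑' j, α j) * B), le_max_left _ _, fun t ht k => ?_⟩
  exact (weight_mul_norm_latticeConv_le hα (hFα t ht) (hGB t ht) k).trans (le_max_right _ _)

theorem hasDerivAt_conv {F' G' : ℝ → (Fin d → ℤ) → ℂ} (hF : RapidDecay F) (hG : RapidDecay G)
    (hF' : RapidDecay F') (hG' : RapidDecay G')
    (hFF' : ∀ t k, HasDerivAt (fun s => F s k) (F' t k) t)
    (hGG' : ∀ t k, HasDerivAt (fun s => G s k) (G' t k) t) (t : ℝ) (k : Fin d → ℤ) :
    HasDerivAt (fun s => latticeConv (F s) (G s) k)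
      (latticeConv (F' t) (G t) k + latticeConv (F t) (G' t) k) t := by
  have hF'G := hF'.locallyDominated_conv hG k
  have hFG' := hF.locallyDominated_conv hG' k
  have hderiv := (hF'G.add hFG').hasDerivAt_tsum (fun j t => (hFF' t (k - j)).mul (hGG' t j))
    ((hF.locallyDominated_conv hG k).summable t)
  rwa [(hF'G.summable t).tsum_add (hFG'.summable t)] at hderiv

end RapidDecay

namespace RapidDecayUpTo

theorem rapidDecay : ∀ {n : ℕ} {F : ℝ → (Fin d → ℤ) → ℂ}, RapidDecayUpTo n F → RapidDecay F
  | 0, _, h => h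
  | _ + 1, _, h => h.1

theorem of_succ : ∀ {n : ℕ} {F : ℝ → (Fin d → ℤ) → ℂ}, RapidDecayUpTo (n + 1) F →
    RapidDecayUpTo n F
  | 0, _, h => h.1
  | _ + 1, _, ⟨hF, F', hFF', hF'⟩ => ⟨hF, F', hFF', hF'.of_succ⟩

theorem zero : ∀ n, RapidDecayUpTo n fun (_ : ℝ) (_ : Fin d → ℤ) => (0 : ℂ)
  | 0 => RapidDecay.zero
  | n + 1 => ⟨RapidDecay.zero, _, fun _ _ => hasDerivAt_const _ _, zero n⟩

theorem add : ∀ {n : ℕ} {F G : ℝ → (Fin d → ℤ) → ℂ}, RapidDecayUpTo n F → RapidDecayUpTo n G →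
    RapidDecayUpTo n fun t k => F t k + G t k
  | 0, _, _, hF, hG => RapidDecay.add hF hG
  | _ + 1, _, _, ⟨hF, _, hFF', hF'⟩, ⟨hG, _, hGG', hG'⟩ =>
    ⟨hF.add hG, _, fun t k => (hFF' t k).add (hGG' t k), hF'.add hG'⟩

theorem multiplier {a : (Fin d → ℤ) → ℂ} (ha : PolynomialGrowth a) :
    ∀ {n : ℕ} {F : ℝ → (Fin d → ℤ) → ℂ}, RapidDecayUpTo n F →
      RapidDecayUpTo n fun t k => a k * F t k
  | 0, _, hF => RapidDecay.multiplier hF ha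
  | _ + 1, _, ⟨hF, _, hFF', hF'⟩ =>
    ⟨hF.multiplier ha, _, fun t k => (hFF' t k).const_mul (a k), hF'.multiplier ha⟩

theorem sum {n : ℕ} {ι : Type*} {F : ι → ℝ → (Fin d → ℤ) → ℂ} (s : Finset ι)
    (hF : ∀ i, RapidDecayUpTo n (F i)) : RapidDecayUpTo n fun t k => ∑ i ∈ s, F i t k := by
  classical
  induction s using Finset.induction_on with
  | empty => simpa using zero n
  | insert i s hi ih =>
    simp only [Finset.sum_insert hi]
    exact (hF i).add ih

theorem conv : ∀ {n : ℕ} {F G : ℝ → (Fin d → ℤ) → ℂ}, RapidDecayUpTo n F → RapidDecayUpTo n G →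
    RapidDecayUpTo n fun t => latticeConv (F t) (G t)
  | 0, _, _, hF, hG => RapidDecay.conv hF hG
  | _ + 1, _, _, hF, hG => by
    obtain ⟨F', hFF', hF'⟩ := hF.2
    obtain ⟨G', hGG', hG'⟩ := hG.2
    exact ⟨hF.1.conv hG.1, _,
      hF.1.hasDerivAt_conv hG.1 hF'.rapidDecay hG'.rapidDecay hFF' hGG',
      (hF'.conv hG.of_succ).add (hF.of_succ.conv hG')⟩

end RapidDecayUpTo

/-! ### Fourier synthesis in space -/

/-- The function on space-time whose Fourier coefficients in space at time `t` are `F t`. -/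
noncomputable def fourierSynthesis (F : ℝ → (Fin d → ℤ) → ℂ) (p : SpaceTime d) : ℂ :=
  ∑' k, F p.1 k * latticeExp k p.2

/-- The Fourier coefficients in space of a function on space-time. -/
noncomputable def spaceCoeff (f : SpaceTime d → ℂ) (t : ℝ) : (Fin d → ℤ) → ℂ :=
  latticeCoeff fun x => f (t, x)

/-- The functional `(t, x) ↦ x i`. -/
abbrev spaceCoord (i : Fin d) : SpaceTime d →L[ℝ] ℝ :=
  (ContinuousLinearMap.proj i).comp (ContinuousLinearMap.snd ℝ ℝ (Fin d → ℝ))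

theorem fourierSynthesis_periodic (F : ℝ → (Fin d → ℤ) → ℂ) (t : ℝ) :
    LatticePeriodic fun x => fourierSynthesis F (t, x) := fun x m => by
  simp only [fourierSynthesis, latticeExp_periodic _ x m]

namespace RapidDecay

variable {F G F' : ℝ → (Fin d → ℤ) → ℂ}

theorem locallyDominated_synthesis (hF : RapidDecay F) :
    LocallyDominated fun k (p : SpaceTime d) => F p.1 k * latticeExp k p.2 := fun R => by
  obtain ⟨α, hα, hFα⟩ := hF.exists_summable_bound R 0
  refine ⟨α, hα, fun p hp k => ?_⟩
  simpa [norm_latticeExp] using hFα p.1 ((norm_fst_le p).trans hp) k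

theorem hasSum_fourierSynthesis (hF : RapidDecay F) (p : SpaceTime d) :
    HasSum (fun k => F p.1 k * latticeExp k p.2) (fourierSynthesis F p) :=
  (hF.locallyDominated_synthesis.summable p).hasSum

theorem continuous_fourierSynthesis (hF : RapidDecay F) : Continuous (fourierSynthesis F) :=
  hF.locallyDominated_synthesis.continuous_tsum fun k =>
    ((hF.continuous k).comp continuous_fst).mul
      ((contDiff_latticeExp (n := 0) k).continuous.comp continuous_snd)

theorem fourierSynthesis_conv (hF : RapidDecay F) (hG : RapidDecay G) (p : SpaceTime d) :
    fourierSynthesis (fun t => latticeConv (F t) (G t)) p =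
      fourierSynthesis F p * fourierSynthesis G p := by
  have hFn := hF.locallyDominated_synthesis.summable_norm p
  have hGn := hG.locallyDominated_synthesis.summable_norm p
  let shear : (Fin d → ℤ) × (Fin d → ℤ) ≃ (Fin d → ℤ) × (Fin d → ℤ) :=
    { toFun := fun q => (q.1 - q.2, q.2)
      invFun := fun q => (q.1 + q.2, q.2)
      left_inv := fun q => by simp
      right_inv := fun q => by simp }
  have hshear := shear.summable_iff.2 (summable_mul_of_summable_norm hFn hGn)
  unfold fourierSynthesis
  rw [tsum_mul_tsum_of_summable_norm hFn hGn, ← shear.tsum_eq]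
  refine Eq.trans (tsum_congr fun k => ?_) (Summable.tsum_prod hshear).symm
  simp only [latticeConv]
  rw [← tsum_mul_right]
  refine tsum_congr fun j => ?_
  have hmode : latticeExp k p.2 = latticeExp (k - j) p.2 * latticeExp j p.2 := by
    rw [← latticeExp_add, sub_add_cancel]
  rw [hmode]
  exact mul_mul_mul_comm ..

theorem hasFDerivAt_synthesis_term (hFF' : ∀ t k, HasDerivAt (fun s => F s k) (F' t k) t)
    (k : Fin d → ℤ) (p : SpaceTime d) :
    HasFDerivAt (fun q : SpaceTime d => F q.1 k * latticeExp k q.2)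
      ((ContinuousLinearMap.fst ℝ ℝ _).smulRight (F' p.1 k * latticeExp k p.2) +
        ∑ i, (spaceCoord i).smulRight (derivSymbol i k * F p.1 k * latticeExp k p.2)) p := by
  have htime := (hFF' p.1 k).hasFDerivAt.comp p hasFDerivAt_fst
  have hspace := (hasFDerivAt_latticeExp k p.2).comp p hasFDerivAt_snd
  refine (htime.mul hspace).congr_fderiv ?_
  ext v
  · simp only [Function.comp_apply, ContinuousLinearMap.smul_comp, ContinuousLinearMap.add_comp,
      add_apply, smul_apply, ContinuousLinearMap.comp_apply, ContinuousLinearMap.inl_apply,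
      ContinuousLinearMap.coe_snd', map_zero, smul_eq_mul, mul_zero, ContinuousLinearMap.coe_fst',
      ContinuousLinearMap.toSpanSingleton_apply, one_smul, zero_add,
      ContinuousLinearMap.smulRight_apply, _root_.sum_apply, zero_smul, Finset.sum_const_zero,
      add_zero]
    ring
  · simp only [Function.comp_apply, latticePhase, ContinuousLinearMap.smul_comp,
      ContinuousLinearMap.add_comp, add_apply, smul_apply, ContinuousLinearMap.comp_apply,
      ContinuousLinearMap.inr_apply, ContinuousLinearMap.coe_snd', _root_.sum_apply,
      ContinuousLinearMap.smulRight_apply, ContinuousLinearMap.proj_apply, Complex.real_smul,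
      smul_eq_mul, Finset.mul_sum, ContinuousLinearMap.coe_fst',
      ContinuousLinearMap.toSpanSingleton_apply, zero_smul, mul_zero, add_zero, zero_add]
    exact Finset.sum_congr rfl fun i _ => by ring

theorem hasFDerivAt_fourierSynthesis (hF : RapidDecay F) (hF' : RapidDecay F')
    (hFF' : ∀ t k, HasDerivAt (fun s => F s k) (F' t k) t) (p : SpaceTime d) :
    HasFDerivAt (fourierSynthesis F)
      ((ContinuousLinearMap.fst ℝ ℝ _).smulRight (fourierSynthesis F' p) +
        ∑ i, (spaceCoord i).smulRight
          (fourierSynthesis (fun t k => derivSymbol i k * F t k) p)) p := by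
  have hDF := fun i : Fin d => hF.multiplier (polynomialGrowth_derivSymbol i)
  let smulRightL := ContinuousLinearMap.smulRightL ℝ (SpaceTime d) ℂ
  have hdominated := (hF'.locallyDominated_synthesis.clm_apply
    (smulRightL (ContinuousLinearMap.fst ℝ ℝ _))).add <|
      .sum Finset.univ fun i => (hDF i).locallyDominated_synthesis.clm_apply
        (smulRightL (spaceCoord i))
  refine (hdominated.hasFDerivAt_tsum (hasFDerivAt_synthesis_term hFF')
    (hF.locallyDominated_synthesis.summable p)).congr_fderiv ?_
  exact (((hF'.hasSum_fourierSynthesis p).mapL _).add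
    (hasSum_sum fun i _ => ((hDF i).hasSum_fourierSynthesis p).mapL _)).tsum_eq

theorem timeDeriv_fourierSynthesis (hF : RapidDecay F) (hF' : RapidDecay F')
    (hFF' : ∀ t k, HasDerivAt (fun s => F s k) (F' t k) t) (p : SpaceTime d) :
    timeDeriv (fourierSynthesis F) p = fourierSynthesis F' p := by
  rw [timeDeriv, (hF.hasFDerivAt_fourierSynthesis hF' hFF' p).fderiv]
  simp

end RapidDecay

theorem RapidDecayUpTo.contDiff_fourierSynthesis : ∀ {n : ℕ} {F : ℝ → (Fin d → ℤ) → ℂ},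
    RapidDecayUpTo n F → ContDiff ℝ n (fourierSynthesis F)
  | 0, _, hF => contDiff_zero.2 (RapidDecay.continuous_fourierSynthesis hF)
  | n + 1, F, hF => by
    obtain ⟨F', hFF', hF'⟩ := hF.2
    rw [Nat.cast_succ, contDiff_succ_iff_hasFDerivAt]
    exact ⟨_, (contDiff_const.smulRight hF'.contDiff_fourierSynthesis).add <| .sum fun i _ =>
      contDiff_const.smulRight
        (hF.of_succ.multiplier (polynomialGrowth_derivSymbol i)).contDiff_fourierSynthesis,
      hF.1.hasFDerivAt_fourierSynthesis hF'.rapidDecay hFF'⟩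

theorem RapidDecayUpTo.spaceDeriv_fourierSynthesis {F : ℝ → (Fin d → ℤ) → ℂ}
    (hF : RapidDecayUpTo 1 F) (i : Fin d) :
    spaceDeriv i (fourierSynthesis F) = fourierSynthesis fun t k => derivSymbol i k * F t k := by
  obtain ⟨hF, F', hFF', hF'⟩ := hF
  funext p
  rw [spaceDeriv, (hF.hasFDerivAt_fourierSynthesis hF' hFF' p).fderiv]
  simp [Pi.single_apply]

namespace SmoothPeriodic

variable {f : SpaceTime d → ℂ}

theorem hasDerivAt_spaceCoeff (hf : SmoothPeriodic f) (t : ℝ) (k : Fin d → ℤ) :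
    HasDerivAt (fun s => spaceCoeff f s k) (spaceCoeff (_root_.timeDeriv f) t k) t := by
  have hexp : ContDiff ℝ (⊤ : ℕ∞) fun p : SpaceTime d => latticeExp (-k) p.2 :=
    (contDiff_latticeExp (-k)).comp contDiff_snd
  have hproduct := hasDerivAt_integral_unitCell (f := f * fun p => latticeExp (-k) p.2) isOpen_univ
    ((hf.contDiff.mul hexp).of_le (by simp)).contDiffOn (mem_univ t)
  refine hproduct.congr_deriv (setIntegral_congr_fun measurableSet_Icc fun x _ => ?_)
  have hmode : HasFDerivAt (fun p : SpaceTime d => latticeExp (-k) p.2) _ (t, x) :=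
    HasFDerivAt.comp (g := latticeExp (-k)) (t, x) (hasFDerivAt_latticeExp (-k) x) hasFDerivAt_snd
  rw [_root_.timeDeriv, ((hf.differentiable (t, x)).hasFDerivAt.mul hmode).fderiv]
  simp [_root_.timeDeriv, mul_comm]

theorem spaceCoeff_spaceDeriv (hf : SmoothPeriodic f) (i : Fin d) (t : ℝ) (k : Fin d → ℤ) :
    spaceCoeff (_root_.spaceDeriv i f) t k = derivSymbol i k * spaceCoeff f t k := by
  rw [spaceCoeff, spaceCoeff, ← latticeCoeff_fderiv_single
    ((hf.contDiff_slice t).of_le (by simp)) (hf.periodic t)]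
  simp only [fderiv_slice_single (hf.differentiable _)]

theorem norm_spaceCoeff_le (hf : SmoothPeriodic f) (T : ℝ) :
    ∃ A : ℝ, 0 ≤ A ∧ ∀ t, |t| ≤ T → ∀ k, ‖spaceCoeff f t k‖ ≤ A := by
  obtain ⟨M, hM⟩ := ((isCompact_Icc (a := -T) (b := T)).prod
    (isCompact_Icc (a := (0 : Fin d → ℝ)) (b := 1))).exists_bound_of_continuousOn
      hf.contDiff.continuous.continuousOn
  refine ⟨max M 0 * volume.real (unitCell d), by positivity, fun t ht k => ?_⟩
  refine norm_setIntegral_le_of_norm_le_const isCompact_Icc.measure_lt_top fun x hx => ?_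
  rw [norm_mul, norm_latticeExp, mul_one]
  exact (hM (t, x) ⟨abs_le.1 ht, hx⟩).trans (le_max_left _ _)

theorem weight_mul_norm_spaceCoeff_le (T : ℝ) (m : ℕ) :
    ∀ {f : SpaceTime d → ℂ}, SmoothPeriodic f →
      ∃ A : ℝ, 0 ≤ A ∧ ∀ t, |t| ≤ T → ∀ k, latticeWeight k ^ m * ‖spaceCoeff f t k‖ ≤ A := by
  induction m with
  | zero =>
    intro f hf
    simpa only [pow_zero, one_mul] using hf.norm_spaceCoeff_le T
  | succ m ih =>
    intro f hf
    obtain ⟨A, hA, hfA⟩ := ih hf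
    choose B hB hfB using fun i : Fin d => ih (hf.spaceDeriv i)
    refine ⟨A + ∑ i, B i, add_nonneg hA (Finset.sum_nonneg fun i _ => hB i), fun t ht k => ?_⟩
    have hk := latticeWeight_pos k
    have hderiv : ∀ i, |(k i : ℝ)| * ‖spaceCoeff f t k‖ ≤
        ‖spaceCoeff (_root_.spaceDeriv i f) t k‖ := fun i => by
      rw [hf.spaceCoeff_spaceDeriv, norm_mul, norm_derivSymbol]
      gcongr
      exact le_mul_of_one_le_left (abs_nonneg _) (by linarith [pi_gt_three])
    calc latticeWeight k ^ (m + 1) * ‖spaceCoeff f t k‖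
        = latticeWeight k ^ m * ‖spaceCoeff f t k‖ +
          ∑ i, latticeWeight k ^ m * (|(k i : ℝ)| * ‖spaceCoeff f t k‖) := by
          rw [← Finset.mul_sum, ← Finset.sum_mul, pow_succ, mul_assoc, ← mul_add, ← one_add_mul]
          rfl
      _ ≤ A + ∑ i, B i := by
          refine add_le_add (hfA t ht k) (Finset.sum_le_sum fun i _ => ?_)
          exact (mul_le_mul_of_nonneg_left (hderiv i) (by positivity)).trans (hfB i t ht k)

theorem rapidDecay_spaceCoeff (hf : SmoothPeriodic f) : RapidDecay (spaceCoeff f) where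
  continuous k := continuous_iff_continuousAt.2 fun t => (hf.hasDerivAt_spaceCoeff t k).continuousAt
  bound T m := weight_mul_norm_spaceCoeff_le T m hf

theorem rapidDecayUpTo_spaceCoeff : ∀ (n : ℕ) {f : SpaceTime d → ℂ}, SmoothPeriodic f →
    RapidDecayUpTo n (spaceCoeff f)
  | 0, _, hf => hf.rapidDecay_spaceCoeff
  | n + 1, _, hf =>
    ⟨hf.rapidDecay_spaceCoeff, _, hf.hasDerivAt_spaceCoeff,
      rapidDecayUpTo_spaceCoeff n hf.timeDeriv⟩

theorem fourierSynthesis_spaceCoeff (hf : SmoothPeriodic f) (p : SpaceTime d) :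
    fourierSynthesis (spaceCoeff f) p = f p := by
  obtain ⟨α, hα, hfα⟩ := hf.rapidDecay_spaceCoeff.exists_summable_bound |p.1| 0
  exact (hasSum_latticeCoeff (hf.contDiff_slice p.1).continuous (hf.periodic p.1)
    (.of_norm_bounded hα fun k => by
      simpa only [pow_zero, one_mul, spaceCoeff] using hfα p.1 le_rfl k) p.2).tsum_eq

end SmoothPeriodic

/-! ### Duhamel's formula -/

section Duhamel

variable {E : Type*} [NormedAddCommGroup E] [NormedSpace ℝ E] {A a : ℝ} {h : ℝ → E} {t : ℝ}

/-- The solution of `y' = h - A y` with `y a = 0`. -/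
noncomputable def duhamel (A a : ℝ) (h : ℝ → E) (t : ℝ) : E :=
  exp (-A * t) • ∫ s in a..t, exp (A * s) • h s

theorem hasDerivAt_duhamel [CompleteSpace E] (hh : Continuous h) (t : ℝ) :
    HasDerivAt (duhamel A a h) (h t - A • duhamel A a h t) t := by
  have hintegrand : Continuous fun s => exp (A * s) • h s := by fun_prop
  have hexp : HasDerivAt (fun t => exp (-A * t)) (exp (-A * t) * -A) t := by
    simpa using ((hasDerivAt_id t).const_mul (-A)).exp
  refine (hexp.smul (hintegrand.integral_hasStrictDerivAt a t).hasDerivAt).congr_deriv ?_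
  rw [smul_smul, ← exp_add, ← add_mul, neg_add_cancel, zero_mul, exp_zero, one_smul, duhamel,
    mul_neg, neg_smul, ← sub_eq_add_neg, smul_smul, mul_comm A (exp _)]

theorem duhamel_eq_zero (hh : ∀ s ≤ a, h s = 0) (ht : t ≤ a) : duhamel A a h t = 0 := by
  rw [duhamel, intervalIntegral.integral_zero_ae, smul_zero]
  refine ae_of_all _ fun s hs => ?_
  rw [uIoc_of_ge ht] at hs
  rw [hh s hs.2, smul_zero]

theorem norm_duhamel_le {l R : ℝ} (hR : 0 ≤ R) (ht : a ≤ t)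
    (hh : ∀ s ∈ Icc a t, ‖h s‖ ≤ (A + l) * (R * exp (l * (s - a)))) :
    ‖duhamel A a h t‖ ≤ R * exp (l * (t - a)) := by
  let majorant := fun s => R * exp (A * s + l * (s - a))
  have hmajorant : ∀ s, HasDerivAt majorant ((A + l) * majorant s) s := fun s => by
    have hexponent : HasDerivAt (fun s => A * s + l * (s - a)) (A * 1 + l * 1) s :=
      ((hasDerivAt_id s).const_mul A).add (((hasDerivAt_id s).sub_const a).const_mul l)
    refine (hexponent.exp.const_mul R).congr_deriv ?_
    simp only [majorant]
    ring
  have hcont : Continuous fun s => (A + l) * majorant s := by fun_prop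
  have hintegral : ‖∫ s in a..t, exp (A * s) • h s‖ ≤ majorant t := calc
    _ ≤ ∫ s in a..t, (A + l) * majorant s := by
      refine intervalIntegral.norm_integral_le_of_norm_le ht (ae_of_all _ fun s hs => ?_)
        (hcont.intervalIntegrable a t)
      rw [norm_smul, norm_of_nonneg (exp_pos _).le]
      refine (mul_le_mul_of_nonneg_left (hh s ⟨hs.1.le, hs.2⟩) (exp_pos _).le).trans_eq ?_
      simp only [majorant, exp_add]
      ring
    _ = majorant t - majorant a :=
      intervalIntegral.integral_eq_sub_of_hasDerivAt (fun s _ => hmajorant s)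
        (hcont.intervalIntegrable a t)
    _ ≤ majorant t := sub_le_self _ (by positivity)
  rw [duhamel, norm_smul, norm_of_nonneg (exp_pos _).le]
  refine (mul_le_mul_of_nonneg_left hintegral (exp_pos _).le).trans_eq ?_
  rw [mul_left_comm, ← exp_add]
  ring_nf

theorem mul_norm_duhamel_le {c l R : ℝ} (hc : 0 < c) (hR : 0 ≤ R) (ht : a ≤ t)
    (hh : ∀ s ∈ Icc a t, c * ‖h s‖ ≤ (A + l) * (R * exp (l * (s - a)))) :
    c * ‖duhamel A a h t‖ ≤ R * exp (l * (t - a)) := by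
  have hbound := norm_duhamel_le (A := A) (h := h) (l := l) (div_nonneg hR hc.le) ht fun s hs => by
    rw [div_mul_eq_mul_div, mul_div_assoc', le_div_iff₀' hc]
    exact hh s hs
  rwa [div_mul_eq_mul_div, le_div_iff₀' hc] at hbound

end Duhamel

/-! ### Picard iteration for the forced advection-diffusion equation -/

/-- The decay rate of the `k`-th Fourier mode under `∂_t - κΔ`. -/
noncomputable def heatRate (κ : ℝ) (k : Fin d → ℤ) : ℝ :=
  κ * ∑ i, ‖derivSymbol i k‖ ^ 2

/-- The Fourier coefficients of the solution of `∂_t w - κΔw = H` with `w = 0` at time `a`, where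
`H` is given by its coefficients. -/
noncomputable def heatSolve (κ a : ℝ) (H : ℝ → (Fin d → ℤ) → ℂ) (t : ℝ) (k : Fin d → ℤ) : ℂ :=
  duhamel (heatRate κ k) a (fun s => H s k) t

/-- The Fourier coefficients of `-∑ i, ∂_{x_i} (u_i w)` in terms of those of `u` and `w`. -/
noncomputable def transport (U : Fin d → (Fin d → ℤ) → ℂ) (G : (Fin d → ℤ) → ℂ)
    (k : Fin d → ℤ) : ℂ :=
  ∑ i, -derivSymbol i k * latticeConv (U i) G k

/-- The sources of the successive Picard corrections: the correction with source `n` is transported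
to produce source `n + 1`. -/
noncomputable def picardSource (κ a : ℝ) (U : Fin d → ℝ → (Fin d → ℤ) → ℂ)
    (g : ℝ → (Fin d → ℤ) → ℂ) : ℕ → ℝ → (Fin d → ℤ) → ℂ
  | 0 => g
  | n + 1 => fun t => transport (fun i => U i t) (heatSolve κ a (picardSource κ a U g n) t)

theorem heatRate_nonneg {κ : ℝ} (hκ : 0 ≤ κ) (k : Fin d → ℤ) : 0 ≤ heatRate κ k :=
  mul_nonneg hκ (Finset.sum_nonneg fun _ _ => sq_nonneg _)

theorem derivSymbol_mul_self (i : Fin d) (k : Fin d → ℤ) :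
    derivSymbol i k * derivSymbol i k = -(‖derivSymbol i k‖ ^ 2 : ℝ) := by
  rw [norm_derivSymbol, mul_pow, sq_abs, derivSymbol, ← sq, mul_pow, mul_pow _ Complex.I,
    Complex.I_sq]
  push_cast
  ring

theorem heatRate_mul_eq (κ : ℝ) (k : Fin d → ℤ) (z : ℂ) :
    (heatRate κ k : ℂ) * z = -(κ * ∑ i, derivSymbol i k * (derivSymbol i k * z)) := by
  simp only [← mul_assoc (derivSymbol _ k), derivSymbol_mul_self, heatRate, neg_mul,
    Finset.sum_neg_distrib, mul_neg, neg_neg, ← Finset.sum_mul]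
  push_cast
  ring

theorem polynomialGrowth_const (z : ℂ) : PolynomialGrowth fun _ : Fin d → ℤ => z :=
  ⟨‖z‖, 0, fun _ => by rw [pow_zero, mul_one]⟩

theorem PolynomialGrowth.neg {b : (Fin d → ℤ) → ℂ} (hb : PolynomialGrowth b) :
    PolynomialGrowth fun k => -b k := by
  simpa only [PolynomialGrowth, norm_neg] using hb

theorem RapidDecayUpTo.transport {n : ℕ} {U : Fin d → ℝ → (Fin d → ℤ) → ℂ}
    {G : ℝ → (Fin d → ℤ) → ℂ} (hU : ∀ i, RapidDecayUpTo n (U i)) (hG : RapidDecayUpTo n G) :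
    RapidDecayUpTo n fun t => transport (fun i => U i t) (G t) :=
  .sum Finset.univ fun i => ((hU i).conv hG).multiplier (polynomialGrowth_derivSymbol i).neg

section Picard

variable {κ a : ℝ} {U : Fin d → ℝ → (Fin d → ℤ) → ℂ} {g H : ℝ → (Fin d → ℤ) → ℂ}

theorem heatSolve_eq_zero (hH : ∀ s ≤ a, H s = 0) {t : ℝ} (ht : t ≤ a) : heatSolve κ a H t = 0 :=
  funext fun k => duhamel_eq_zero (fun s hs => congrFun (hH s hs) k) ht

theorem RapidDecay.heatSolve (hκ : 0 ≤ κ) (hH : RapidDecay H) (hzero : ∀ s ≤ a, H s = 0) :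
    RapidDecay (heatSolve κ a H) := by
  refine ⟨fun k => continuous_iff_continuousAt.2 fun t =>
    (hasDerivAt_duhamel (hH.continuous k) t).continuousAt, fun T m => ?_⟩
  obtain ⟨B, hB, hHB⟩ := hH.bound (max |a| T) m
  refine ⟨B * exp (T - a), by positivity, fun t ht k => ?_⟩
  obtain hta | hat := le_total t a
  · rw [heatSolve_eq_zero hzero hta, Pi.zero_apply, norm_zero, mul_zero]
    positivity
  have htT := (le_abs_self t).trans ht
  have hk := heatRate_nonneg hκ k
  refine (mul_norm_duhamel_le (l := 1) (pow_pos (latticeWeight_pos k) m) hB hat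
    fun s hs => ?_).trans (by gcongr; linarith)
  have hsT : |s| ≤ max |a| T := (abs_le_max_abs_abs hs.1 hs.2).trans (max_le_max le_rfl ht)
  have hexp : 1 ≤ exp (1 * (s - a)) := one_le_exp (by linarith [hs.1])
  calc latticeWeight k ^ m * ‖H s k‖ ≤ B := hHB s hsT k
    _ ≤ B * exp (1 * (s - a)) := le_mul_of_one_le_right hB hexp
    _ ≤ _ := le_mul_of_one_le_left (by positivity) (by linarith)

-- The dissipation rate is quadratic in the frequency and transport costs only one derivative, so
-- by AM-GM transport is dominated by half of the dissipation rate plus a constant.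
theorem exists_weight_mul_norm_transport_le (hκ : 0 < κ) (hU : ∀ i, RapidDecay (U i)) (T : ℝ)
    (m : ℕ) : ∃ l : ℝ, 1 ≤ l ∧ ∀ t, |t| ≤ T → ∀ (G : (Fin d → ℤ) → ℂ) (B : ℝ),
      (∀ j, latticeWeight j ^ m * ‖G j‖ ≤ B) → ∀ k,
        latticeWeight k ^ m * ‖transport (fun i => U i t) G k‖ ≤ (heatRate κ k + l) * (B / 2) := by
  choose α hα hUα using fun i => (hU i).exists_summable_bound T m
  let M := fun i => ∑' j, α i j
  have hM : 0 ≤ ∑ i, M i ^ 2 / κ := Finset.sum_nonneg fun i _ => by positivity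
  refine ⟨∑ i, M i ^ 2 / κ + 1, by linarith, fun t ht G B hGB k => ?_⟩
  have hk := latticeWeight_pos k
  have hB : 0 ≤ B := (by positivity : (0 : ℝ) ≤ _).trans (hGB k)
  have amgm : ∀ i, ‖derivSymbol i k‖ * M i ≤ (κ * ‖derivSymbol i k‖ ^ 2 + M i ^ 2 / κ) / 2 :=
    fun i => by
      have hsq : 0 ≤ (κ * ‖derivSymbol i k‖ - M i) ^ 2 / κ := by positivity
      have hexpand : (κ * ‖derivSymbol i k‖ - M i) ^ 2 / κ =
        κ * ‖derivSymbol i k‖ ^ 2 - 2 * (‖derivSymbol i k‖ * M i) + M i ^ 2 / κ := by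
        field_simp
        ring
      linarith
  calc latticeWeight k ^ m * ‖transport (fun i => U i t) G k‖
      ≤ ∑ i, ‖derivSymbol i k‖ * (latticeWeight k ^ m * ‖latticeConv (U i t) G k‖) := by
        simp only [mul_left_comm ‖derivSymbol _ k‖, ← Finset.mul_sum]
        gcongr
        refine norm_sum_le_of_le _ fun i _ => ?_
        rw [norm_mul, norm_neg]
    _ ≤ ∑ i, (κ * ‖derivSymbol i k‖ ^ 2 + M i ^ 2 / κ) / 2 * B := by
        refine Finset.sum_le_sum fun i _ => ?_
        refine (mul_le_mul_of_nonneg_left (weight_mul_norm_latticeConv_le (hα i) (hUα i t ht) hGB k)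
          (norm_nonneg _)).trans ?_
        rw [← mul_assoc]
        exact mul_le_mul_of_nonneg_right (amgm i) hB
    _ = (heatRate κ k + ∑ i, M i ^ 2 / κ) * (B / 2) := by
        rw [← Finset.sum_mul, ← Finset.sum_div, Finset.sum_add_distrib, ← Finset.mul_sum, heatRate]
        ring
    _ ≤ (heatRate κ k + (∑ i, M i ^ 2 / κ + 1)) * (B / 2) := by
        gcongr
        linarith

theorem picardSource_eq_zero (hzero : ∀ s ≤ a, g s = 0) {s : ℝ} (hs : s ≤ a) :
    ∀ n, picardSource κ a U g n s = 0 := fun n => by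
  induction n generalizing s with
  | zero => exact hzero s hs
  | succ n ih =>
    funext k
    simp only [picardSource, transport, heatSolve_eq_zero (fun _ hr => ih hr) hs, latticeConv,
      Pi.zero_apply, mul_zero, tsum_zero, Finset.sum_const_zero]

theorem rapidDecay_picardSource (hκ : 0 ≤ κ) (hU : ∀ i, RapidDecay (U i)) (hg : RapidDecay g)
    (hzero : ∀ s ≤ a, g s = 0) : ∀ n, RapidDecay (picardSource κ a U g n)
  | 0 => hg
  | n + 1 => RapidDecayUpTo.transport (n := 0) hU
    ((rapidDecay_picardSource hκ hU hg hzero n).heatSolve hκ fun _ hs =>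
      picardSource_eq_zero hzero hs n)

theorem exists_weight_mul_norm_picardSource_le (hκ : 0 < κ) (hU : ∀ i, RapidDecay (U i))
    (hg : RapidDecay g) (T : ℝ) (m : ℕ) : ∃ l B : ℝ, 0 ≤ l ∧ 0 ≤ B ∧ ∀ n, ∀ t ∈ Icc a T, ∀ k,
      latticeWeight k ^ m * ‖picardSource κ a U g n t k‖ ≤
        (heatRate κ k + l) * (B * (1 / 2) ^ n * exp (l * (t - a))) := by
  obtain ⟨l, hl, htransport⟩ := exists_weight_mul_norm_transport_le hκ hU (max |a| |T|) m
  obtain ⟨B, hB, hgB⟩ := hg.bound (max |a| |T|) m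
  refine ⟨l, B, by linarith, hB, fun n => ?_⟩
  induction n with
  | zero =>
    intro t ht k
    have hk := heatRate_nonneg hκ.le k
    have hexp : 1 ≤ exp (l * (t - a)) :=
      one_le_exp (mul_nonneg (by linarith) (sub_nonneg.2 ht.1))
    calc latticeWeight k ^ m * ‖g t k‖ ≤ B := hgB t (abs_le_max_abs_abs ht.1 ht.2) k
      _ ≤ B * (1 / 2) ^ 0 * exp (l * (t - a)) := by
        rw [pow_zero, mul_one]
        exact le_mul_of_one_le_right hB hexp
      _ ≤ _ := le_mul_of_one_le_left (by positivity) (by linarith)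
  | succ n ih =>
    intro t ht k
    have hcorrection : ∀ j, latticeWeight j ^ m * ‖heatSolve κ a (picardSource κ a U g n) t j‖ ≤
        B * (1 / 2) ^ n * exp (l * (t - a)) := fun j =>
      mul_norm_duhamel_le (pow_pos (latticeWeight_pos j) m) (by positivity) ht.1 fun s hs =>
        ih s ⟨hs.1, hs.2.trans ht.2⟩ j
    refine (htransport t (abs_le_max_abs_abs ht.1 ht.2) _ _ hcorrection k).trans_eq ?_
    rw [pow_succ]
    ring

theorem exists_picard_bounds (hκ : 0 < κ) (hU : ∀ i, RapidDecay (U i)) (hg : RapidDecay g)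
    (hzero : ∀ s ≤ a, g s = 0) (T : ℝ) (m : ℕ) : ∃ l B : ℝ, 0 ≤ l ∧ 0 ≤ B ∧
      ∀ n t, |t| ≤ T → ∀ k,
        latticeWeight k ^ m * ‖picardSource κ a U g n t k‖ ≤
          (heatRate κ k + l) * (B * (1 / 2) ^ n) ∧
        latticeWeight k ^ m * ‖heatSolve κ a (picardSource κ a U g n) t k‖ ≤ B * (1 / 2) ^ n := by
  obtain ⟨l, B, hl, hB, hbound⟩ :=
    exists_weight_mul_norm_picardSource_le (a := a) hκ hU hg T m
  refine ⟨l, B * exp (l * (T - a)), hl, by positivity, fun n t ht k => ?_⟩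
  have hk := heatRate_nonneg hκ.le k
  obtain hta | hat := le_total t a
  · rw [picardSource_eq_zero hzero hta n,
      heatSolve_eq_zero (fun s hs => picardSource_eq_zero hzero hs n) hta]
    simp only [Pi.zero_apply, norm_zero, mul_zero]
    exact ⟨by positivity, by positivity⟩
  have htT := (le_abs_self t).trans ht
  have hmono : B * (1 / 2) ^ n * exp (l * (t - a)) ≤ B * exp (l * (T - a)) * (1 / 2) ^ n := by
    rw [mul_right_comm]
    gcongr
  exact ⟨(hbound n t ⟨hat, htT⟩ k).trans (by gcongr),
    (mul_norm_duhamel_le (pow_pos (latticeWeight_pos k) m) (by positivity) hat fun s hs =>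
      hbound n s ⟨hs.1, hs.2.trans htT⟩ k).trans hmono⟩

theorem hasSum_latticeConv {ι : Type*} {a : (Fin d → ℤ) → ℂ} {b : ι → (Fin d → ℤ) → ℂ} {β : ι → ℝ}
    (ha : Summable fun k => ‖a k‖) (hβ : Summable β) (hb : ∀ n j, ‖b n j‖ ≤ β n) (k : Fin d → ℤ) :
    HasSum (fun n => latticeConv a (b n) k) (latticeConv a (fun j => ∑' n, b n j) k) := by
  have hshift : Summable fun j => ‖a (k - j)‖ := (Equiv.subLeft k).summable_iff.2 ha
  have hdouble : Summable fun q : ι × (Fin d → ℤ) => a (k - q.2) * b q.1 q.2 := by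
    refine .of_norm_bounded (hβ.abs.mul_of_nonneg hshift (fun _ => abs_nonneg _)
      fun _ => norm_nonneg _) fun q => ?_
    rw [norm_mul, mul_comm]
    gcongr
    exact (hb _ _).trans (le_abs_self _)
  have hswap : latticeConv a (fun j => ∑' n, b n j) k = ∑' n, latticeConv a (b n) k := by
    simp only [latticeConv, ← tsum_mul_left]
    exact Summable.tsum_comm (f := fun n j => a (k - j) * b n j) hdouble
  rw [hswap]
  exact hdouble.prod.hasSum

theorem hasSum_transport {t : ℝ} (hU : ∀ i, RapidDecay (U i)) {ι : Type*}
    {b : ι → (Fin d → ℤ) → ℂ} {β : ι → ℝ} (hβ : Summable β) (hb : ∀ n j, ‖b n j‖ ≤ β n)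
    (k : Fin d → ℤ) :
    HasSum (fun n => transport (fun i => U i t) (b n) k)
      (transport (fun i => U i t) (fun j => ∑' n, b n j) k) :=
  hasSum_sum fun i _ => by
    obtain ⟨α, hα, hUα⟩ := (hU i).exists_summable_bound |t| 0
    refine (hasSum_latticeConv (.of_nonneg_of_le (fun _ => norm_nonneg _) (fun j => ?_) hα)
      hβ hb k).mul_left _
    simpa only [pow_zero, one_mul] using hUα t le_rfl j

theorem hasDerivAt_picardSum (hκ : 0 < κ) (hU : ∀ i, RapidDecay (U i)) (hg : RapidDecay g)
    (hzero : ∀ s ≤ a, g s = 0) (t : ℝ) (k : Fin d → ℤ) :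
    HasDerivAt (fun s => ∑' n, heatSolve κ a (picardSource κ a U g n) s k)
      (transport (fun i => U i t) (fun j => ∑' n, heatSolve κ a (picardSource κ a U g n) t j) k +
        g t k - heatRate κ k * ∑' n, heatSolve κ a (picardSource κ a U g n) t k) t := by
  have hcorrections : ∀ k, LocallyDominated fun n t =>
      heatSolve κ a (picardSource κ a U g n) t k := fun k T => by
    obtain ⟨l, B, -, -, hB⟩ := exists_picard_bounds hκ hU hg hzero T 0
    simp only [pow_zero, one_mul] at hB
    exact ⟨_, summable_geometric_two.mul_left B, fun t ht n => (hB n t ht k).2⟩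
  have hsources : LocallyDominated fun n t => picardSource κ a U g n t k := fun T => by
    obtain ⟨l, B, -, -, hB⟩ := exists_picard_bounds hκ hU hg hzero T 0
    simp only [pow_zero, one_mul] at hB
    exact ⟨_, (summable_geometric_two.mul_left B).mul_left _, fun t ht n => (hB n t ht k).1⟩
  have hdecay := (hcorrections k).clm_apply ((-heatRate κ k) • ContinuousLinearMap.id ℝ ℂ)
  refine ((hsources.add hdecay).hasDerivAt_tsum (fun n t => ?_)
    ((hcorrections k).summable t)).congr_deriv ?_
  · refine (hasDerivAt_duhamel
      ((rapidDecay_picardSource hκ.le hU hg hzero n).continuous k) t).congr_deriv ?_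
    simp only [smul_apply, ContinuousLinearMap.id_apply, neg_smul, sub_eq_add_neg, heatSolve]
  · have htransport : ∑' n, picardSource κ a U g (n + 1) t k =
        transport (fun i => U i t)
          (fun j => ∑' n, heatSolve κ a (picardSource κ a U g n) t j) k := by
      obtain ⟨l, B, -, -, hB⟩ := exists_picard_bounds hκ hU hg hzero |t| 0
      simp only [pow_zero, one_mul] at hB
      exact (hasSum_transport hU (summable_geometric_two.mul_left B)
        (fun n j => (hB n t le_rfl j).2) k).tsum_eq
    rw [(hsources.summable t).tsum_add (hdecay.summable t),
      ← ContinuousLinearMap.map_tsum _ ((hcorrections k).summable t),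
      (hsources.summable t).tsum_eq_zero_add, htransport]
    simp only [picardSource, smul_apply, ContinuousLinearMap.id_apply, neg_smul, Complex.real_smul]
    ring

theorem exists_coefficient_solution (hκ : 0 < κ) (hU : ∀ i, RapidDecay (U i)) (hg : RapidDecay g)
    (hzero : ∀ s ≤ a, g s = 0) :
    ∃ c : ℝ → (Fin d → ℤ) → ℂ, RapidDecay c ∧ (∀ t ≤ a, c t = 0) ∧ ∀ t k,
      HasDerivAt (fun s => c s k)
        (transport (fun i => U i t) (c t) k + g t k - heatRate κ k * c t k) t := by
  refine ⟨fun t k => ∑' n, heatSolve κ a (picardSource κ a U g n) t k, ⟨fun k =>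
    continuous_iff_continuousAt.2 fun t => (hasDerivAt_picardSum hκ hU hg hzero t k).continuousAt,
    fun T m => ?_⟩, fun t ht => ?_, hasDerivAt_picardSum hκ hU hg hzero⟩
  · obtain ⟨l, B, -, hB, hbound⟩ := exists_picard_bounds hκ hU hg hzero T m
    refine ⟨B * 2, by positivity, fun t ht k => ?_⟩
    have hweight : ‖(latticeWeight k ^ m : ℂ)‖ = latticeWeight k ^ m := by
      rw [norm_pow, Complex.norm_real, norm_of_nonneg (latticeWeight_pos k).le]
    rw [← hweight, ← norm_mul, ← tsum_mul_left]
    refine tsum_of_norm_bounded (hasSum_geometric_two.mul_left B) fun n => ?_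
    rw [norm_mul, hweight]
    exact (hbound n t ht k).2
  · funext k
    simp only [heatSolve_eq_zero (fun _ hs => picardSource_eq_zero hzero hs _) ht, Pi.zero_apply,
      tsum_zero]

end Picard

theorem RapidDecayUpTo.of_hasDerivAt {Φ : (ℝ → (Fin d → ℤ) → ℂ) → ℝ → (Fin d → ℤ) → ℂ}
    {c : ℝ → (Fin d → ℤ) → ℂ} (hc : RapidDecay c)
    (hderiv : ∀ t k, HasDerivAt (fun s => c s k) (Φ c t k) t)
    (hΦ : ∀ n, RapidDecayUpTo n c → RapidDecayUpTo n (Φ c)) : ∀ n, RapidDecayUpTo n c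
  | 0 => hc
  | n + 1 => ⟨hc, Φ c, hderiv, hΦ n (of_hasDerivAt hc hderiv hΦ n)⟩

theorem fderiv_re_apply {W : SpaceTime d → ℂ} (hW : Differentiable ℝ W) (v : SpaceTime d) :
    (fun p => fderiv ℝ (fun q => (W q).re) p v) = fun p => (fderiv ℝ W p v).re := by
  funext p
  have hre : HasFDerivAt (fun q => (W q).re) (Complex.reCLM.comp (fderiv ℝ W p)) p :=
    Complex.reCLM.hasFDerivAt.comp p (hW p).hasFDerivAt
  rw [hre.fderiv]
  rfl

theorem timeDeriv_re {W : SpaceTime d → ℂ} (hW : Differentiable ℝ W) :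
    timeDeriv (fun p => (W p).re) = fun p => (timeDeriv W p).re :=
  fderiv_re_apply hW _

theorem spaceDeriv_re {W : SpaceTime d → ℂ} (hW : Differentiable ℝ W) (i : Fin d) :
    spaceDeriv i (fun p => (W p).re) = fun p => (spaceDeriv i W p).re :=
  fderiv_re_apply hW _

theorem SmoothPeriodic.re {W : SpaceTime d → ℂ} (hW : SmoothPeriodic W) :
    SmoothPeriodic fun p => (W p).re where
  contDiff := Complex.reCLM.contDiff.comp hW.contDiff
  periodic t x k := congrArg Complex.re (hW.periodic t x k)

theorem smoothPeriodic_fourierSynthesis {c : ℝ → (Fin d → ℤ) → ℂ} (hc : ∀ n, RapidDecayUpTo n c) :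
    SmoothPeriodic (fourierSynthesis c) where
  contDiff := contDiff_infty.2 fun n => (hc n).contDiff_fourierSynthesis
  periodic := fourierSynthesis_periodic c

/-- `w` solves the forced advection-diffusion equation in conservative form,
`∂_t w = κΔw - ∑ i, ∂_{x_i} (u_i w) + g`. -/
def SolvesConservative (κ : ℝ) (u : Fin d → SpaceTime d → ℝ) (g w : SpaceTime d → ℝ) : Prop :=
  ∀ p, timeDeriv w p = κ * ∑ i, spaceDeriv i (spaceDeriv i w) p -
    ∑ i, spaceDeriv i (fun q => u i q * w q) p + g p

theorem exists_smooth_coefficient_solution {κ a : ℝ} (hκ : 0 < κ)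
    {U : Fin d → ℝ → (Fin d → ℤ) → ℂ} {g : ℝ → (Fin d → ℤ) → ℂ}
    (hU : ∀ n i, RapidDecayUpTo n (U i)) (hg : ∀ n, RapidDecayUpTo n g)
    (hzero : ∀ s ≤ a, g s = 0) :
    ∃ c E : ℝ → (Fin d → ℤ) → ℂ, (∀ n, RapidDecayUpTo n c) ∧ (∀ t ≤ a, c t = 0) ∧
      RapidDecay E ∧ (∀ t k, HasDerivAt (fun s => c s k) (E t k) t) ∧
      ∀ t k, E t k = κ * ∑ i, derivSymbol i k * (derivSymbol i k * c t k) +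
        (transport (fun i => U i t) (c t) k + g t k) := by
  obtain ⟨c, hc, hczero, hderiv⟩ := exists_coefficient_solution hκ (fun i => hU 0 i) (hg 0) hzero
  let Φ : (ℝ → (Fin d → ℤ) → ℂ) → ℝ → (Fin d → ℤ) → ℂ := fun c t k =>
    κ * ∑ i, derivSymbol i k * (derivSymbol i k * c t k) +
      (transport (fun i => U i t) (c t) k + g t k)
  have hΦ : ∀ n, RapidDecayUpTo n c → RapidDecayUpTo n (Φ c) := fun n hn =>
    (RapidDecayUpTo.multiplier (polynomialGrowth_const κ) (.sum Finset.univ fun i =>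
      (hn.multiplier (polynomialGrowth_derivSymbol i)).multiplier
        (polynomialGrowth_derivSymbol i))).add ((RapidDecayUpTo.transport (hU n) hn).add (hg n))
  have hderivΦ : ∀ t k, HasDerivAt (fun s => c s k) (Φ c t k) t := fun t k =>
    (hderiv t k).congr_deriv (by rw [heatRate_mul_eq, sub_neg_eq_add, add_comm])
  exact ⟨c, Φ c, .of_hasDerivAt hc hderivΦ hΦ, hczero, hΦ 0 hc, hderivΦ, fun _ _ => rfl⟩

theorem fourierSynthesis_eq_of_balance {κ : ℝ} {U : Fin d → ℝ → (Fin d → ℤ) → ℂ}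
    {c E G : ℝ → (Fin d → ℤ) → ℂ} (hU : ∀ i, RapidDecay (U i)) (hc : RapidDecay c)
    (hE : RapidDecay E) (hG : RapidDecay G)
    (hbalance : ∀ t k, E t k = κ * ∑ i, derivSymbol i k * (derivSymbol i k * c t k) +
      (transport (fun i => U i t) (c t) k + G t k)) (p : SpaceTime d) :
    fourierSynthesis E p =
      κ * ∑ i, fourierSynthesis (fun t k => derivSymbol i k * (derivSymbol i k * c t k)) p -
        ∑ i, fourierSynthesis (fun t k => derivSymbol i k * latticeConv (U i t) (c t) k) p +
        fourierSynthesis G p := by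
  have hmul := fun {i} {F : ℝ → (Fin d → ℤ) → ℂ} (hF : RapidDecay F) =>
    hF.multiplier (polynomialGrowth_derivSymbol i)
  have hdiffusion := (hasSum_sum (s := Finset.univ) fun i _ =>
    (hmul (i := i) (hmul (i := i) hc)).hasSum_fourierSynthesis p).mul_left (κ : ℂ)
  have hadvection := hasSum_sum (s := Finset.univ) fun i _ =>
    (hmul (i := i) ((hU i).conv hc)).hasSum_fourierSynthesis p
  refine (hE.hasSum_fourierSynthesis p).unique
    (((hdiffusion.sub hadvection).add (hG.hasSum_fourierSynthesis p)).congr_fun fun k => ?_)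
  rw [hbalance]
  simp only [transport, neg_mul, Finset.sum_neg_distrib, ← Finset.sum_mul]
  ring

theorem solvesConservative_re_fourierSynthesis {κ : ℝ} {u : Fin d → SpaceTime d → ℝ}
    {g : SpaceTime d → ℝ} (hu : ∀ i, SmoothPeriodic (u i)) (hg : SmoothPeriodic g)
    {c E : ℝ → (Fin d → ℤ) → ℂ} (hc : ∀ n, RapidDecayUpTo n c) (hE : RapidDecay E)
    (hderiv : ∀ t k, HasDerivAt (fun s => c s k) (E t k) t)
    (hbalance : ∀ t k, E t k = κ * ∑ i, derivSymbol i k * (derivSymbol i k * c t k) +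
      (transport (fun i => spaceCoeff (fun p => (u i p : ℂ)) t) (c t) k +
        spaceCoeff (fun p => (g p : ℂ)) t k)) :
    SolvesConservative κ u g fun p => (fourierSynthesis c p).re := by
  intro p
  have hU := fun i n => (hu i).ofReal.rapidDecayUpTo_spaceCoeff n
  have hmul := fun {n i} {F : ℝ → (Fin d → ℤ) → ℂ} (hF : RapidDecayUpTo n F) =>
    hF.multiplier (polynomialGrowth_derivSymbol i)
  have hflux := fun i n => (hU i n).conv (hc n)
  have hdiff : ∀ {F : ℝ → (Fin d → ℤ) → ℂ}, RapidDecayUpTo 1 F →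
      Differentiable ℝ (fourierSynthesis F) := fun hF =>
    hF.contDiff_fourierSynthesis.differentiable one_ne_zero
  have hproduct : ∀ i, (fun q => u i q * (fourierSynthesis c q).re) = fun q =>
      (fourierSynthesis (fun t => latticeConv (spaceCoeff (fun p => (u i p : ℂ)) t) (c t)) q).re :=
    fun i => by
      funext q
      rw [RapidDecay.fourierSynthesis_conv (hU i 0) (hc 0),
        (hu i).ofReal.fourierSynthesis_spaceCoeff, Complex.re_ofReal_mul]
  simp only [timeDeriv_re (hdiff (hc 1)), RapidDecay.timeDeriv_fourierSynthesis (hc 0) hE hderiv]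
  rw [fourierSynthesis_eq_of_balance (fun i => hU i 0) (hc 0) hE hg.ofReal.rapidDecay_spaceCoeff
    hbalance, hg.ofReal.fourierSynthesis_spaceCoeff]
  simp only [spaceDeriv_re (hdiff (hc 1)), (hc 1).spaceDeriv_fourierSynthesis, hproduct,
    spaceDeriv_re (hdiff (hmul (hc 1))), (hmul (hc 1)).spaceDeriv_fourierSynthesis,
    spaceDeriv_re (hdiff (hflux _ 1)), (hflux _ 1).spaceDeriv_fourierSynthesis,
    Complex.add_re, Complex.sub_re, Complex.re_ofReal_mul, Complex.re_sum, Complex.ofReal_re]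

theorem exists_forced_solution {κ a : ℝ} (hκ : 0 < κ) {u : Fin d → SpaceTime d → ℝ}
    {g : SpaceTime d → ℝ} (hu : ∀ i, SmoothPeriodic (u i)) (hg : SmoothPeriodic g)
    (hzero : ∀ t ≤ a, ∀ x, g (t, x) = 0) :
    ∃ w : SpaceTime d → ℝ, SmoothPeriodic w ∧ (∀ t ≤ a, ∀ x, w (t, x) = 0) ∧
      SolvesConservative κ u g w := by
  obtain ⟨c, E, hc, hczero, hE, hderiv, hbalance⟩ := exists_smooth_coefficient_solution hκ
    (fun n i => (hu i).ofReal.rapidDecayUpTo_spaceCoeff n)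
    (fun n => hg.ofReal.rapidDecayUpTo_spaceCoeff n) (a := a) fun s hs => by
      funext k
      simp [spaceCoeff, latticeCoeff, hzero s hs]
  exact ⟨fun p => (fourierSynthesis c p).re, (smoothPeriodic_fourierSynthesis hc).re,
    fun t ht x => by simp [fourierSynthesis, hczero t ht],
    solvesConservative_re_fourierSynthesis hu hg hc hE hderiv hbalance⟩

/-! ### Smooth solutions of advection-diffusion equations -/

section Calculus

variable {f g : (Fin d → ℝ) → ℝ} {x : Fin d → ℝ}

theorem contDiff_pd (hf : ContDiff ℝ (⊤ : ℕ∞) f) (i : Fin d) : ContDiff ℝ (⊤ : ℕ∞) (pd d i f) :=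
  (hf.fderiv_right (m := (⊤ : ℕ∞)) (by simp)).clm_apply contDiff_const

theorem pd_add (hf : DifferentiableAt ℝ f x) (hg : DifferentiableAt ℝ g x) (i : Fin d) :
    pd d i (fun y => f y + g y) x = pd d i f x + pd d i g x :=
  DFunLike.congr_fun (fderiv_fun_add hf hg) _

theorem pd_mul (hf : DifferentiableAt ℝ f x) (hg : DifferentiableAt ℝ g x) (i : Fin d) :
    pd d i (fun y => f y * g y) x = f x * pd d i g x + g x * pd d i f x :=
  DFunLike.congr_fun (fderiv_fun_mul hf hg) _

theorem pd_const_mul (c : ℝ) (f : (Fin d → ℝ) → ℝ) (i : Fin d) (x : Fin d → ℝ) :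
    pd d i (fun y => c * f y) x = c * pd d i f x :=
  DFunLike.congr_fun (congrFun (fderiv_const_smul_field (𝕜 := ℝ) (f := f) c) x) _

theorem lap_add (hf : ContDiff ℝ (⊤ : ℕ∞) f) (hg : ContDiff ℝ (⊤ : ℕ∞) g) (x : Fin d → ℝ) :
    lap d (fun y => f y + g y) x = lap d f x + lap d g x := by
  have hdiff : ∀ {h : (Fin d → ℝ) → ℝ}, ContDiff ℝ (⊤ : ℕ∞) h → Differentiable ℝ h := fun hh =>
    hh.differentiable (by simp)
  simp only [lap, ← Finset.sum_add_distrib, pd_add (hdiff hf _) (hdiff hg _),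
    pd_add (hdiff (contDiff_pd hf _) x) (hdiff (contDiff_pd hg _) x)]

theorem lap_const_mul (c : ℝ) (f : (Fin d → ℝ) → ℝ) (x : Fin d → ℝ) :
    lap d (fun y => c * f y) x = c * lap d f x := by
  simp only [lap, pd_const_mul, Finset.mul_sum]

theorem PeriodicIn.pd (hf : PeriodicIn d f) (i : Fin d) : PeriodicIn d (pd d i f) := by
  intro x k
  have hshift : (fun y => f (y + fun i => (k i : ℝ))) = f := funext fun y => hf y k
  rw [_root_.pd, _root_.pd, ← fderiv_comp_add_right, hshift]

theorem integral_pd_eq_zero (hf : ContDiff ℝ (⊤ : ℕ∞) f) (hper : PeriodicIn d f) (i : Fin d) :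
    ∫ x in unitCell d, pd d i f x = 0 :=
  integral_fderiv_single_eq_zero (hf.of_le (by exact_mod_cast le_top)) hper i

theorem integral_mul_lap (hf : ContDiff ℝ (⊤ : ℕ∞) f) (hper : PeriodicIn d f) :
    ∫ x in unitCell d, f x * lap d f x = -∫ x in unitCell d, ∑ i, pd d i f x ^ 2 := by
  have hdiff := hf.differentiable (by simp)
  have hpd := contDiff_pd hf
  have hflux : ∀ i, ContDiff ℝ (⊤ : ℕ∞) fun y => f y * pd d i f y := fun i => hf.mul (hpd i)
  have hgreen : ∀ x, f x * lap d f x =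
      ∑ i, pd d i (fun y => f y * pd d i f y) x - ∑ i, pd d i f x ^ 2 := fun x => by
    simp only [pd_mul (hdiff x) ((hpd _).differentiable (by simp) x), Finset.sum_add_distrib,
      ← sq, ← Finset.mul_sum, add_sub_cancel_right, lap]
  simp only [hgreen]
  rw [integral_sub
      (ContDiff.sum fun i _ => contDiff_pd (hflux i) i).continuous.integrableOn_Icc
      (ContDiff.sum fun i _ => (hpd i).pow 2).continuous.integrableOn_Icc,
    integral_finsetSum _ fun i _ => (contDiff_pd (hflux i) i).continuous.integrableOn_Icc,
    Finset.sum_eq_zero fun i _ => integral_pd_eq_zero (hflux i)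
      (fun x k => congrArg₂ (· * ·) (hper x k) (hper.pd i x k)) i, zero_sub]

theorem integral_mul_advection {v : (Fin d → ℝ) → Fin d → ℝ} (hf : ContDiff ℝ (⊤ : ℕ∞) f)
    (hper : PeriodicIn d f) (hv : ∀ i, ContDiff ℝ (⊤ : ℕ∞) fun y => v y i)
    (hvper : ∀ i, PeriodicIn d fun y => v y i) (hdiv : ∀ x, ∑ i, pd d i (fun y => v y i) x = 0) :
    ∫ x in unitCell d, f x * ∑ i, v x i * pd d i f x = 0 := by
  have hdiff := hf.differentiable (by simp)
  have hflux : ∀ i, ContDiff ℝ (⊤ : ℕ∞) fun y => v y i * (f y * f y) := fun i =>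
    (hv i).mul (hf.mul hf)
  have hconservative : ∀ x, f x * ∑ i, v x i * pd d i f x =
      2⁻¹ * ∑ i, pd d i (fun y => v y i * (f y * f y)) x := fun x => by
    simp only [pd_mul ((hv _).differentiable (by simp) x) ((hdiff x).fun_mul (hdiff x)),
      pd_mul (hdiff x) (hdiff x), Finset.sum_add_distrib, ← Finset.mul_sum, hdiv x, mul_zero,
      add_zero]
    rw [Finset.mul_sum, Finset.mul_sum]
    exact Finset.sum_congr rfl fun i _ => by ring
  simp only [hconservative]
  rw [integral_const_mul,
    integral_finsetSum _ fun i _ => (contDiff_pd (hflux i) i).continuous.integrableOn_Icc,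
    Finset.sum_eq_zero fun i _ => integral_pd_eq_zero (hflux i)
      (fun x k => by simp only [show f _ = f x from hper x k, show v _ i = v x i from hvper i x k])
      i, mul_zero]

end Calculus

/-- `v` is a smooth, `ℤ^d`-periodic, divergence-free velocity field for times in `I`. -/
structure IncompressibleOn (v : ℝ → (Fin d → ℝ) → Fin d → ℝ) (I : Set ℝ) : Prop where
  contDiffOn : ContDiffOn ℝ (⊤ : ℕ∞) (fun p : SpaceTime d => v p.1 p.2) (I ×ˢ univ)
  periodic : ∀ t ∈ I, ∀ i, PeriodicIn d fun x => v t x i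
  divergence_eq_zero : ∀ t ∈ I, ∀ x, ∑ i, pd d i (fun y => v t y i) x = 0

/-- `θ` is a smooth, `ℤ^d`-periodic solution of `∂_t θ - κΔθ + v·∇θ = g` for times in `I`. The time
derivative is taken within `I`, hence one-sided at an endpoint belonging to `I`. -/
structure IsSolution (κ : ℝ) (v : ℝ → (Fin d → ℝ) → Fin d → ℝ) (g : ℝ → (Fin d → ℝ) → ℝ)
    (I : Set ℝ) (θ : ℝ → (Fin d → ℝ) → ℝ) : Prop where
  contDiffOn : ContDiffOn ℝ (⊤ : ℕ∞) (fun p : SpaceTime d => θ p.1 p.2) (I ×ˢ univ)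
  periodic : ∀ t ∈ I, PeriodicIn d (θ t)
  equation : ∀ t ∈ I, ∀ x, derivWithin (fun r => θ r x) I t - κ * lap d (θ t) x +
    ∑ i, v t x i * pd d i (θ t) x = g t x

/-- `T` is a dissipation time of the velocity field `v` at diffusivity `κ`: every mean-zero solution
started at a nonnegative time loses half of its `L²` norm within time `T`. -/
def IsDissipationTime (v : ℝ → (Fin d → ℝ) → Fin d → ℝ) (κ T : ℝ) : Prop :=
  ∀ s ≥ 0, ∀ θ, IsSolution κ v 0 (Ici s) θ → (∀ t ∈ Ici s, ∫ x in unitCell d, θ t x = 0) →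
    L2norm d (θ (s + T)) ≤ 1 / 2 * L2norm d (θ s)

/-- The accelerated flow `u_σ(t, x) = σ'(t) u(σ(t), x)`. -/
noncomputable def accelerate (σ : ℝ → ℝ) (u : ℝ → (Fin d → ℝ) → Fin d → ℝ) :
    ℝ → (Fin d → ℝ) → Fin d → ℝ :=
  fun t x i => deriv σ t * u (σ t) x i

namespace IncompressibleOn

variable {v : ℝ → (Fin d → ℝ) → Fin d → ℝ} {I J : Set ℝ}

theorem contDiff_slice (hv : IncompressibleOn v I) {t : ℝ} (ht : t ∈ I) (i : Fin d) :
    ContDiff ℝ (⊤ : ℕ∞) fun x => v t x i :=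
  contDiff_pi.1 (_root_.contDiff_slice hv.contDiffOn ht) i

theorem mono (hv : IncompressibleOn v I) (hJI : J ⊆ I) : IncompressibleOn v J where
  contDiffOn := hv.contDiffOn.mono (prod_mono hJI subset_rfl)
  periodic t ht := hv.periodic t (hJI ht)
  divergence_eq_zero t ht := hv.divergence_eq_zero t (hJI ht)

theorem accelerate (hv : IncompressibleOn v I) {σ : ℝ → ℝ} (hJ : IsOpen J)
    (hσ : ContDiffOn ℝ (⊤ : ℕ∞) σ J) (hmaps : MapsTo σ J I) :
    IncompressibleOn (accelerate σ v) J where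
  contDiffOn := by
    have hfst : ∀ {φ : ℝ → ℝ}, ContDiffOn ℝ (⊤ : ℕ∞) φ J →
        ContDiffOn ℝ (⊤ : ℕ∞) (fun p : SpaceTime d => φ p.1) (J ×ˢ univ) := fun hφ =>
      hφ.comp contDiff_fst.contDiffOn fun p hp => hp.1
    have hcomp := hv.contDiffOn.comp ((hfst hσ).prodMk contDiff_snd.contDiffOn)
      fun p hp => ⟨hmaps hp.1, trivial⟩
    exact (hfst ((contDiffOn_infty_iff_deriv_of_isOpen hJ).1 hσ).2).smul hcomp
  periodic t ht i x k := congrArg (deriv σ t * ·) (hv.periodic _ (hmaps ht) i x k)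
  divergence_eq_zero t ht x := by
    simp only [_root_.accelerate, pd_const_mul, ← Finset.mul_sum,
      hv.divergence_eq_zero _ (hmaps ht), mul_zero]

end IncompressibleOn

namespace IsSolution

variable {κ : ℝ} {v : ℝ → (Fin d → ℝ) → Fin d → ℝ} {g : ℝ → (Fin d → ℝ) → ℝ} {I J : Set ℝ}
  {θ : ℝ → (Fin d → ℝ) → ℝ}

theorem contDiff_slice (hθ : IsSolution κ v g I θ) {t : ℝ} (ht : t ∈ I) :
    ContDiff ℝ (⊤ : ℕ∞) (θ t) :=
  _root_.contDiff_slice hθ.contDiffOn ht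

theorem differentiableOn_time (hθ : IsSolution κ v g I θ) (x : Fin d → ℝ) :
    DifferentiableOn ℝ (fun r => θ r x) I :=
  (hθ.contDiffOn.differentiableOn (by simp)).comp (f := fun r => (r, x)) (by fun_prop)
    fun _ hr => ⟨hr, trivial⟩

theorem hasDerivAt_time (hθ : IsSolution κ v g I θ) (hI : IsOpen I) {t : ℝ} (ht : t ∈ I)
    (x : Fin d → ℝ) : HasDerivAt (fun r => θ r x) (derivWithin (fun r => θ r x) I t) t :=
  (hθ.differentiableOn_time x t ht).hasDerivWithinAt.hasDerivAt (hI.mem_nhds ht)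

theorem mono (hθ : IsSolution κ v g I θ) (hJ : UniqueDiffOn ℝ J) (hJI : J ⊆ I) :
    IsSolution κ v g J θ where
  contDiffOn := hθ.contDiffOn.mono (prod_mono hJI subset_rfl)
  periodic t ht := hθ.periodic t (hJI ht)
  equation t ht x := by
    rw [derivWithin_subset hJI (hJ t ht) (hθ.differentiableOn_time x t (hJI ht))]
    exact hθ.equation t (hJI ht) x

theorem add {h η : ℝ → (Fin d → ℝ) → ℝ} (hθ : IsSolution κ v g I θ) (hη : IsSolution κ v h I η) :
    IsSolution κ v (fun t x => g t x + h t x) I fun t x => θ t x + η t x where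
  contDiffOn := hθ.contDiffOn.add hη.contDiffOn
  periodic t ht x k := congrArg₂ (· + ·) (hθ.periodic t ht x k) (hη.periodic t ht x k)
  equation t ht x := by
    have hdiff : ∀ {f : (Fin d → ℝ) → ℝ}, ContDiff ℝ (⊤ : ℕ∞) f → DifferentiableAt ℝ f x :=
      fun hf => hf.differentiable (by simp) x
    rw [derivWithin_fun_add (hθ.differentiableOn_time x t ht) (hη.differentiableOn_time x t ht),
      lap_add (hθ.contDiff_slice ht) (hη.contDiff_slice ht)]
    simp only [pd_add (hdiff (hθ.contDiff_slice ht)) (hdiff (hη.contDiff_slice ht)), mul_add,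
      Finset.sum_add_distrib]
    linear_combination hθ.equation t ht x + hη.equation t ht x

theorem timeDeriv_sq_eq (hθ : IsSolution κ v 0 I θ) (hI : IsOpen I) {t : ℝ} (ht : t ∈ I)
    (x : Fin d → ℝ) : timeDeriv (fun p : SpaceTime d => θ p.1 p.2 ^ 2) (t, x) =
      2 * κ * (θ t x * lap d (θ t) x) - 2 * (θ t x * ∑ i, v t x i * pd d i (θ t) x) := by
  have hdiff : DifferentiableAt ℝ (fun p : SpaceTime d => θ p.1 p.2) (t, x) :=
    (hθ.contDiffOn.differentiableOn (by simp)).differentiableAt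
      ((hI.prod isOpen_univ).mem_nhds ⟨ht, trivial⟩)
  have hsq : timeDeriv (fun p : SpaceTime d => θ p.1 p.2 ^ 2) (t, x) =
      2 * θ t x ^ 1 * derivWithin (fun r => θ r x) I t :=
    (hasDerivAt_timeDeriv (hdiff.fun_pow 2)).unique ((hθ.hasDerivAt_time hI ht x).fun_pow 2)
  have heq := hθ.equation t ht x
  simp only [Pi.zero_apply] at heq
  linear_combination hsq + 2 * θ t x * heq

theorem hasDerivAt_integral_sq (hθ : IsSolution κ v 0 I θ) (hI : IsOpen I)
    (hv : IncompressibleOn v I) {t : ℝ} (ht : t ∈ I) :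
    HasDerivAt (fun r => ∫ x in unitCell d, θ r x ^ 2)
      (-(2 * κ) * ∫ x in unitCell d, ∑ i, pd d i (θ t) x ^ 2) t := by
  have hsmooth := hθ.contDiff_slice ht
  have hpd : ∀ i, Continuous (pd d i (θ t)) := fun i => (contDiff_pd hsmooth i).continuous
  have hlap : Continuous fun x => 2 * κ * (θ t x * lap d (θ t) x) :=
    continuous_const.mul <| hsmooth.continuous.mul <| continuous_finsetSum _ fun i _ =>
      (contDiff_pd (contDiff_pd hsmooth i) i).continuous
  have hadv : Continuous fun x => 2 * (θ t x * ∑ i, v t x i * pd d i (θ t) x) :=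
    continuous_const.mul <| hsmooth.continuous.mul <| continuous_finsetSum _ fun i _ =>
      (hv.contDiff_slice ht i).continuous.mul (hpd i)
  refine (hasDerivAt_integral_unitCell hI ((hθ.contDiffOn.pow 2).of_le (by exact_mod_cast le_top))
    ht).congr_deriv ?_
  simp only [hθ.timeDeriv_sq_eq hI ht]
  rw [integral_sub hlap.integrableOn_Icc hadv.integrableOn_Icc, integral_const_mul,
    integral_const_mul, integral_mul_lap hsmooth (hθ.periodic t ht),
    integral_mul_advection hsmooth (hθ.periodic t ht) (hv.contDiff_slice ht) (hv.periodic t ht)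
      (hv.divergence_eq_zero t ht)]
  ring

theorem antitoneOn_L2norm (hθ : IsSolution κ v 0 I θ) (hκ : 0 ≤ κ) (hI : IsOpen I)
    (hconv : Convex ℝ I) (hv : IncompressibleOn v I) : AntitoneOn (fun t => L2norm d (θ t)) I := by
  have henergy : AntitoneOn (fun t => ∫ x in unitCell d, θ t x ^ 2) I := by
    refine antitoneOn_of_hasDerivWithinAt_nonpos hconv
      (fun t ht => (hθ.hasDerivAt_integral_sq hI hv ht).continuousAt.continuousWithinAt)
      (fun t ht => (hθ.hasDerivAt_integral_sq hI hv (interior_subset ht)).hasDerivWithinAt)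
      fun t _ => ?_
    exact mul_nonpos_of_nonpos_of_nonneg (by linarith)
      (integral_nonneg fun x => Finset.sum_nonneg fun i _ => sq_nonneg _)
  exact fun a ha b hb hab => Real.sqrt_le_sqrt (henergy ha hb hab)

end IsSolution

/-! ### Localising the dissipation time -/

section Cutoff

variable {φ χ : ℝ → ℝ} {I J : Set ℝ}

theorem exists_smooth_cutoff {a b : ℝ} (hab : a < b) : ∃ χ : ℝ → ℝ, ContDiff ℝ (⊤ : ℕ∞) χ ∧
    (∀ t ≤ a, χ t = 1) ∧ tsupport χ ⊆ Iic b ∧ tsupport (deriv χ) ⊆ Icc a b := by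
  have hab' : 0 < b - a := sub_pos.2 hab
  set χ : ℝ → ℝ := fun t => 1 - smoothTransition ((t - a) / (b - a))
  have hone : ∀ t ≤ a, χ t = 1 := fun t ht => by
    simp only [χ, smoothTransition.zero_of_nonpos
      (div_nonpos_of_nonpos_of_nonneg (sub_nonpos.2 ht) hab'.le), sub_zero]
  have hzero : ∀ t ≥ b, χ t = 0 := fun t ht => by
    simp only [χ, smoothTransition.one_of_one_le ((one_le_div hab').2 (sub_le_sub_right ht a)),
      sub_self]
  have hderiv : ∀ {s : Set ℝ} {c : ℝ}, IsOpen s → (∀ t ∈ s, χ t = c) → ∀ t ∈ s, deriv χ t = 0 :=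
    fun hs hconst t ht => by
      rw [(eventuallyEq_of_mem (hs.mem_nhds ht) hconst).deriv_eq, deriv_const]
  refine ⟨χ, contDiff_const.sub (smoothTransition.contDiff.comp (by fun_prop)), hone,
    closure_minimal (fun t ht => not_lt.1 fun hbt => ht (hzero t hbt.le)) isClosed_Iic,
    closure_minimal (fun t ht => ⟨not_lt.1 fun hta => ht ?_, not_lt.1 fun hbt => ht ?_⟩)
      isClosed_Icc⟩
  · exact hderiv isOpen_Iio (fun r hr => hone r (le_of_lt hr)) t hta
  · exact hderiv isOpen_Ioi (fun r hr => hzero r (le_of_lt hr)) t hbt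

theorem contDiffOn_mul_of_tsupport {f : SpaceTime d → ℝ} (hφ : ContDiff ℝ (⊤ : ℕ∞) φ)
    (hI : IsOpen I) (hf : ContDiffOn ℝ (⊤ : ℕ∞) f (I ×ˢ univ)) (hsupp : J ∩ tsupport φ ⊆ I) :
    ContDiffOn ℝ (⊤ : ℕ∞) (fun p => φ p.1 * f p) (J ×ˢ univ) := by
  rintro ⟨t, x⟩ ⟨ht, -⟩
  by_cases htφ : t ∈ tsupport φ
  · have hfx : ContDiffAt ℝ (⊤ : ℕ∞) f (t, x) :=
      hf.contDiffAt ((hI.prod isOpen_univ).mem_nhds ⟨hsupp ⟨ht, htφ⟩, trivial⟩)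
    exact ((hφ.comp contDiff_fst).contDiffAt.mul hfx).contDiffWithinAt
  · have hzero : (fun p : SpaceTime d => φ p.1 * f p) =ᶠ[𝓝 (t, x)] fun _ => 0 := by
      filter_upwards [continuous_fst.continuousAt.eventually
        (notMem_tsupport_iff_eventuallyEq.1 htφ)] with p hp
      simp only [hp, Pi.zero_apply, zero_mul]
    exact (contDiffAt_const.congr_of_eventuallyEq hzero).contDiffWithinAt

theorem smoothPeriodic_mul_of_tsupport {f : SpaceTime d → ℝ} (hφ : ContDiff ℝ (⊤ : ℕ∞) φ)
    (hI : IsOpen I) (hf : ContDiffOn ℝ (⊤ : ℕ∞) f (I ×ˢ univ))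
    (hper : ∀ t ∈ I, PeriodicIn d fun x => f (t, x)) (hsupp : tsupport φ ⊆ I) :
    SmoothPeriodic fun p => φ p.1 * f p where
  contDiff := by
    rw [← contDiffOn_univ, ← univ_prod_univ]
    exact contDiffOn_mul_of_tsupport hφ hI hf (inter_subset_right.trans hsupp)
  periodic t x k := by
    by_cases ht : t ∈ tsupport φ
    · exact congrArg (φ t * ·) (hper t (hsupp ht) x k)
    · simp only [image_eq_zero_of_notMem_tsupport ht, zero_mul]

theorem integral_mul_eq_zero_of_tsupport {f : (Fin d → ℝ) → ℝ} {t : ℝ}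
    (hf : t ∈ tsupport φ → ∫ x in unitCell d, f x = 0) : ∫ x in unitCell d, φ t * f x = 0 := by
  rw [integral_const_mul]
  by_cases ht : t ∈ tsupport φ
  · rw [hf ht, mul_zero]
  · rw [image_eq_zero_of_notMem_tsupport ht, zero_mul]

theorem IncompressibleOn.exists_extension {v : ℝ → (Fin d → ℝ) → Fin d → ℝ}
    (hv : IncompressibleOn v (Ici 0)) {r : ℝ} (hr : 0 < r) :
    ∃ U : Fin d → SpaceTime d → ℝ, (∀ i, SmoothPeriodic (U i)) ∧
      ∀ t ≥ r, ∀ x i, U i (t, x) = v t x i := by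
  obtain ⟨χ, hχ, hone, hsupp, -⟩ := exists_smooth_cutoff (show r / 3 < r / 2 by linarith)
  have hvanish : tsupport (fun t => 1 - χ t) ⊆ Ioi 0 :=
    (closure_minimal (fun t (ht : 1 - χ t ≠ 0) => not_lt.1 fun htr : t < r / 3 =>
      ht (by rw [hone t htr.le, sub_self])) isClosed_Ici).trans (Ici_subset_Ioi.2 (by positivity))
  refine ⟨fun i p => (1 - χ p.1) * v p.1 p.2 i, fun i => smoothPeriodic_mul_of_tsupport
    (contDiff_const.sub hχ) isOpen_Ioi
    (contDiffOn_pi.1 (hv.mono Ioi_subset_Ici_self).contDiffOn i)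
    (fun t ht => hv.periodic t (Ioi_subset_Ici_self ht) i) hvanish, fun t ht x i => ?_⟩
  have hχt : χ t = 0 := image_eq_zero_of_notMem_tsupport fun htχ =>
    ((half_lt_self hr).trans_le ht).not_ge (hsupp htχ)
  simp only [hχt, sub_zero, one_mul]

theorem IsSolution.cutoff {κ : ℝ} {v : ℝ → (Fin d → ℝ) → Fin d → ℝ}
    {g η : ℝ → (Fin d → ℝ) → ℝ} (hη : IsSolution κ v g I η) (hI : IsOpen I)
    (hχ : ContDiff ℝ (⊤ : ℕ∞) χ) (hJ : UniqueDiffOn ℝ J) (hsupp : J ∩ tsupport χ ⊆ I) :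
    IsSolution κ v (fun t x => deriv χ t * η t x + χ t * g t x) J fun t x => χ t * η t x where
  contDiffOn := contDiffOn_mul_of_tsupport hχ hI hη.contDiffOn hsupp
  periodic t ht x k := by
    by_cases htχ : t ∈ tsupport χ
    · exact congrArg (χ t * ·) (hη.periodic t (hsupp ⟨ht, htχ⟩) x k)
    · simp only [image_eq_zero_of_notMem_tsupport htχ, zero_mul]
  equation t ht x := by
    simp only [pd_const_mul, lap_const_mul]
    have hχt : HasDerivAt χ (deriv χ t) t := (hχ.differentiable (by simp) t).hasDerivAt
    by_cases htχ : t ∈ tsupport χ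
    · have htI := hsupp ⟨ht, htχ⟩
      rw [(hχt.fun_mul (hη.hasDerivAt_time hI htI x)).hasDerivWithinAt.derivWithin (hJ t ht)]
      simp only [mul_left_comm _ (χ t), ← Finset.mul_sum]
      linear_combination χ t * hη.equation t htI x
    · have hzero := notMem_tsupport_iff_eventuallyEq.1 htχ
      have hprod : (fun r => χ r * η r x) =ᶠ[𝓝 t] fun _ => 0 := by
        filter_upwards [hzero] with r hr
        simp only [hr, Pi.zero_apply, zero_mul]
      rw [((hasDerivAt_const t 0).congr_of_eventuallyEq hprod).hasDerivWithinAt.derivWithin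
        (hJ t ht)]
      simp [hzero.deriv_eq, image_eq_zero_of_notMem_tsupport htχ]

end Cutoff

section Conservative

variable {κ : ℝ} {U : Fin d → SpaceTime d → ℝ} {g w : SpaceTime d → ℝ}

namespace SmoothPeriodic

theorem pd_slice (hw : SmoothPeriodic w) (i : Fin d) (t : ℝ) (x : Fin d → ℝ) :
    pd d i (fun y => w (t, y)) x = _root_.spaceDeriv i w (t, x) :=
  fderiv_slice_single (hw.differentiable _) i

theorem integral_spaceDeriv (hw : SmoothPeriodic w) (i : Fin d) (t : ℝ) :
    ∫ x in unitCell d, _root_.spaceDeriv i w (t, x) = 0 := by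
  simpa only [hw.pd_slice] using integral_pd_eq_zero (hw.contDiff_slice t) (hw.periodic t) i

end SmoothPeriodic

namespace SolvesConservative

theorem isSolution (hsol : SolvesConservative κ U g w) (hw : SmoothPeriodic w)
    (hU : ∀ i, SmoothPeriodic (U i)) {v : ℝ → (Fin d → ℝ) → Fin d → ℝ} {I : Set ℝ}
    (hI : UniqueDiffOn ℝ I) (hv : IncompressibleOn v I)
    (hUv : ∀ t ∈ I, ∀ x i, U i (t, x) = v t x i) :
    IsSolution κ v (fun t x => g (t, x)) I fun t x => w (t, x) where
  contDiffOn := hw.contDiff.contDiffOn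
  periodic t _ := hw.periodic t
  equation t ht x := by
    have hflux : ∀ i, spaceDeriv i (fun q => U i q * w q) (t, x) =
        v t x i * spaceDeriv i w (t, x) + w (t, x) * pd d i (fun y => v t y i) x := fun i => by
      rw [← ((hU i).mul hw).pd_slice, ← hw.pd_slice]
      simp only [hUv t ht]
      exact pd_mul ((hv.contDiff_slice ht i).differentiable (by simp) x)
        ((hw.contDiff_slice t).differentiable (by simp) x) i
    rw [(hasDerivAt_timeDeriv (hw.differentiable (t, x))).hasDerivWithinAt.derivWithin (hI t ht),
      hsol]
    simp only [lap, hw.pd_slice, (hw.spaceDeriv _).pd_slice, hflux, Finset.sum_add_distrib,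
      ← Finset.mul_sum, hv.divergence_eq_zero t ht]
    ring

theorem hasDerivAt_integral (hsol : SolvesConservative κ U g w) (hw : SmoothPeriodic w)
    (hU : ∀ i, SmoothPeriodic (U i)) (hg : SmoothPeriodic g) (t : ℝ) :
    HasDerivAt (fun r => ∫ x in unitCell d, w (r, x)) (∫ x in unitCell d, g (t, x)) t := by
  have hint : ∀ {f : SpaceTime d → ℝ}, SmoothPeriodic f →
      Integrable (fun x => f (t, x)) (volume.restrict (unitCell d)) := fun hf =>
    (hf.contDiff_slice t).continuous.integrableOn_Icc
  have hdiffusion : ∀ i, SmoothPeriodic (spaceDeriv i (spaceDeriv i w)) := fun i =>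
    (hw.spaceDeriv i).spaceDeriv i
  have hflux : ∀ i, SmoothPeriodic fun q => U i q * w q := fun i => (hU i).mul hw
  have hdiffusion_int := (integrable_finsetSum Finset.univ
    fun i _ => hint (hdiffusion i)).const_mul κ
  have hflux_int := integrable_finsetSum Finset.univ fun i _ => hint ((hflux i).spaceDeriv i)
  refine (hasDerivAt_integral_unitCell isOpen_univ
    (hw.contDiff.contDiffOn.of_le (by exact_mod_cast le_top)) trivial).congr_deriv ?_
  simp only [hsol (t, _)]
  have hsub := integral_sub hdiffusion_int hflux_int
  rw [integral_add (by exact hdiffusion_int.sub hflux_int) (hint hg), hsub, integral_const_mul,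
    integral_finsetSum _ fun i _ => hint (hdiffusion i),
    integral_finsetSum _ fun i _ => hint ((hflux i).spaceDeriv i)]
  simp only [(hw.spaceDeriv _).integral_spaceDeriv, (hflux _).integral_spaceDeriv,
    Finset.sum_const_zero, mul_zero, sub_zero, zero_add]

theorem integral_eq_zero (hsol : SolvesConservative κ U g w) (hw : SmoothPeriodic w)
    (hU : ∀ i, SmoothPeriodic (U i)) (hg : SmoothPeriodic g)
    (hmean : ∀ t, ∫ x in unitCell d, g (t, x) = 0) {a : ℝ} (hzero : ∀ x, w (a, x) = 0) (t : ℝ) :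
    ∫ x in unitCell d, w (t, x) = 0 := by
  have hderiv := hsol.hasDerivAt_integral hw hU hg
  rw [is_const_of_deriv_eq_zero (fun r => (hderiv r).differentiableAt)
    (fun r => (hderiv r).deriv.trans (hmean r)) t a]
  simp only [hzero, integral_zero]

end SolvesConservative

end Conservative

section Halving

variable {κ : ℝ} {v : ℝ → (Fin d → ℝ) → Fin d → ℝ}

theorem exists_solution_forced_by_mul {φ : ℝ → ℝ} {η : ℝ → (Fin d → ℝ) → ℝ} {I : Set ℝ} {b c : ℝ}
    (hκ : 0 < κ) (hv : IncompressibleOn v (Ici 0)) (hI : IsOpen I)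
    (hη : ContDiffOn ℝ (⊤ : ℕ∞) (fun p : SpaceTime d => η p.1 p.2) (I ×ˢ univ))
    (hper : ∀ t ∈ I, PeriodicIn d (η t)) (hmean : ∀ t ∈ I, ∫ x in unitCell d, η t x = 0)
    (hφ : ContDiff ℝ (⊤ : ℕ∞) φ) (hsupp : tsupport φ ⊆ I ∩ Ioi c) (hb : 0 < b) :
    ∃ w, IsSolution κ v (fun t x => φ t * η t x) (Ici b) w ∧ (∀ t ≤ c, ∀ x, w t x = 0) ∧
      ∀ t, ∫ x in unitCell d, w t x = 0 := by
  have hforce : SmoothPeriodic fun p : SpaceTime d => φ p.1 * η p.1 p.2 :=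
    smoothPeriodic_mul_of_tsupport hφ hI hη hper (hsupp.trans inter_subset_left)
  obtain ⟨U, hU, hUv⟩ := hv.exists_extension hb
  obtain ⟨w, hw, hw_zero, hsol⟩ := exists_forced_solution (a := c) hκ hU hforce fun t ht x => by
    rw [image_eq_zero_of_notMem_tsupport fun htφ => (hsupp htφ).2.not_ge ht, zero_mul]
  refine ⟨fun t x => w (t, x), hsol.isSolution hw hU (uniqueDiffOn_Ici b)
    (hv.mono (Ici_subset_Ici.2 hb.le)) hUv, hw_zero, hsol.integral_eq_zero hw hU hforce
      (fun t => ?_) (hw_zero c le_rfl)⟩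
  exact integral_mul_eq_zero_of_tsupport fun htφ => hmean t (hsupp htφ).1

/- Cut `η` off smoothly after time `c`. The product `χη` is forced by `χ'η`; the solution with zero
data at time `c` and forcing `-χ'η` removes that forcing without changing anything up to `c`. -/
theorem IsSolution.exists_continuation {α β b c : ℝ} {η : ℝ → (Fin d → ℝ) → ℝ}
    (hη : IsSolution κ v 0 (Ioo α β) η) (hκ : 0 < κ) (hv : IncompressibleOn v (Ici 0))
    (hmean : ∀ t ∈ Ioo α β, ∫ x in unitCell d, η t x = 0) (hα : 0 ≤ α) (hαb : α < b)
    (hbc : b ≤ c) (hcβ : c < β) :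
    ∃ θ, IsSolution κ v 0 (Ici b) θ ∧ (∀ t ∈ Ici b, ∫ x in unitCell d, θ t x = 0) ∧
      ∀ t ≤ c, θ t = η t := by
  obtain ⟨a', hca', ha'β⟩ := exists_between hcβ
  obtain ⟨b', hab', hb'β⟩ := exists_between ha'β
  obtain ⟨χ, hχ, hone, hsupp, hsupp'⟩ := exists_smooth_cutoff hab'
  have hsuppI : Ici b ∩ tsupport χ ⊆ Ioo α β := fun t ht =>
    ⟨hαb.trans_le ht.1, (hsupp ht.2).trans_lt hb'β⟩
  have hsupp'I : tsupport (-deriv χ) ⊆ Ioo α β ∩ Ioi c := fun t ht =>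
    have htχ := hsupp' ((tsupport_neg (deriv χ)).subset ht)
    ⟨⟨((hαb.trans_le hbc).trans hca').trans_le htχ.1, htχ.2.trans_lt hb'β⟩, hca'.trans_le htχ.1⟩
  obtain ⟨w, hw, hw_zero, hw_mean⟩ := exists_solution_forced_by_mul hκ hv isOpen_Ioo
    hη.contDiffOn hη.periodic hmean (contDiff_infty_iff_deriv.1 hχ).2.neg hsupp'I
    (hα.trans_lt hαb)
  have hcut := hη.cutoff isOpen_Ioo hχ (uniqueDiffOn_Ici b) hsuppI
  have hsum := hcut.add hw
  refine ⟨_, { hsum with equation := fun t ht x => (hsum.equation t ht x).trans (by simp) },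
    fun t ht => ?_, fun t ht => funext fun x => ?_⟩
  · rw [integral_add (hcut.contDiff_slice ht).continuous.integrableOn_Icc
        (hw.contDiff_slice ht).continuous.integrableOn_Icc, hw_mean t,
      integral_mul_eq_zero_of_tsupport fun htχ => hmean t (hsuppI ⟨ht, htχ⟩), add_zero]
  · simp only [hone t (ht.trans hca'.le), hw_zero t ht x, one_mul, add_zero]

theorem IsDissipationTime.halving_Ioo {T : ℝ} (hT : IsDissipationTime v κ T) (hκ : 0 < κ)
    (hT₀ : 0 ≤ T) (hv : IncompressibleOn v (Ici 0)) {α β b : ℝ} {η : ℝ → (Fin d → ℝ) → ℝ}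
    (hη : IsSolution κ v 0 (Ioo α β) η) (hmean : ∀ t ∈ Ioo α β, ∫ x in unitCell d, η t x = 0)
    (hα : 0 ≤ α) (hαb : α < b) (hbβ : b + T < β) :
    L2norm d (η (b + T)) ≤ 1 / 2 * L2norm d (η b) := by
  have hb := le_add_of_nonneg_right (a := b) hT₀
  obtain ⟨θ, hθ, hθmean, hθη⟩ := hη.exists_continuation hκ hv hmean hα hαb hb hbβ
  rw [← hθη _ le_rfl, ← hθη b hb]
  exact hT b (hα.trans hαb.le) θ hθ hθmean

end Halving

section AffineTimeChange

variable {σ : ℝ → ℝ} {u : ℝ → (Fin d → ℝ) → Fin d → ℝ} {θ : ℝ → (Fin d → ℝ) → ℝ}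
  {ν A t₀ r₀ : ℝ} {I J : Set ℝ}

theorem IsSolution.decelerate (hθ : IsSolution ν (accelerate σ u) 0 I θ) (hI : IsOpen I)
    (hJ : UniqueDiffOn ℝ J) (hA : A ≠ 0) (hmaps : ∀ r ∈ J, t₀ + (r - r₀) / A ∈ I)
    (hσ : ∀ r ∈ J, σ (t₀ + (r - r₀) / A) = r) (hσ' : ∀ r ∈ J, deriv σ (t₀ + (r - r₀) / A) = A) :
    IsSolution (ν / A) u 0 J fun r => θ (t₀ + (r - r₀) / A) where
  contDiffOn := hθ.contDiffOn.comp (f := fun p : SpaceTime d => (t₀ + (p.1 - r₀) / A, p.2))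
    (by fun_prop) fun p hp => ⟨hmaps p.1 hp.1, trivial⟩
  periodic r hr := hθ.periodic _ (hmaps r hr)
  equation r hr x := by
    have htime : HasDerivAt (fun r => t₀ + (r - r₀) / A) (1 / A) r :=
      (((hasDerivAt_id r).sub_const r₀).div_const A).const_add t₀
    have hslow : HasDerivAt (fun r => θ (t₀ + (r - r₀) / A) x)
        (derivWithin (fun t => θ t x) I (t₀ + (r - r₀) / A) * (1 / A)) r :=
      HasDerivAt.comp (h₂ := fun t => θ t x) r (hθ.hasDerivAt_time hI (hmaps r hr) x) htime
    rw [hslow.hasDerivWithinAt.derivWithin (hJ r hr)]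
    have heq := hθ.equation _ (hmaps r hr) x
    simp only [accelerate, hσ' r hr, hσ r hr, mul_assoc, ← Finset.mul_sum, Pi.zero_apply] at heq ⊢
    generalize t₀ + (r - r₀) / A = t at heq ⊢
    field_simp
    linear_combination heq

theorem IsDissipationTime.halving_of_affine {T a b : ℝ} (hT : IsDissipationTime u (ν / A) T)
    (hν : 0 < ν) (hT₀ : 0 ≤ T) (hu : IncompressibleOn u (Ici 0)) (hA : 0 < A) (ha : 0 < a)
    (hσ : ∀ t ∈ Ioo (t₀ - a) (t₀ + b), σ t = r₀ + A * (t - t₀)) (hr₀ : 0 ≤ r₀ - A * a)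
    (hTb : T < A * b) (hθ : IsSolution ν (accelerate σ u) 0 (Ioo (t₀ - a) (t₀ + b)) θ)
    (hmean : ∀ t ∈ Ioo (t₀ - a) (t₀ + b), ∫ x in unitCell d, θ t x = 0) :
    L2norm d (θ (t₀ + T / A)) ≤ 1 / 2 * L2norm d (θ t₀) := by
  have hmaps : ∀ r ∈ Ioo (r₀ - A * a) (r₀ + A * b),
      t₀ + (r - r₀) / A ∈ Ioo (t₀ - a) (t₀ + b) := fun r hr => by
    have hlower : -a < (r - r₀) / A := (lt_div_iff₀ hA).2 (by linarith [hr.1])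
    have hupper : (r - r₀) / A < b := (div_lt_iff₀ hA).2 (by linarith [hr.2])
    exact ⟨by linarith, by linarith⟩
  have hderiv : ∀ t ∈ Ioo (t₀ - a) (t₀ + b), deriv σ t = A := fun t ht => by
    rw [(eventuallyEq_of_mem (isOpen_Ioo.mem_nhds ht) hσ).deriv_eq]
    simp
  have hslow := hθ.decelerate isOpen_Ioo isOpen_Ioo.uniqueDiffOn hA.ne' hmaps
    (fun r hr => by rw [hσ _ (hmaps r hr)]; field_simp; ring) fun r hr => hderiv _ (hmaps r hr)
  simpa using hT.halving_Ioo (div_pos hν hA) hT₀ hu hslow (fun r hr => hmean _ (hmaps r hr)) hr₀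
    (sub_lt_self r₀ (mul_pos hA ha)) (by linarith)

end AffineTimeChange

/-! ### The accelerating clock -/

section Clock

/-- A smooth staircase within distance one of the identity, constant near each integer. -/
noncomputable def smoothFloor (y : ℝ) : ℝ := ⌊y⌋ + smoothTransition (4 * Int.fract y - 2)

theorem floor_le_smoothFloor (y : ℝ) : (⌊y⌋ : ℝ) ≤ smoothFloor y :=
  le_add_of_nonneg_right (smoothTransition.nonneg _)

theorem smoothFloor_le_add_one (y : ℝ) : smoothFloor y ≤ y + 1 :=
  add_le_add (Int.floor_le y) (smoothTransition.le_one _)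

theorem smoothFloor_eq_intCast {n : ℤ} {y : ℝ} (hy : y ∈ Icc (n - 1 / 4 : ℝ) (n + 1 / 2)) :
    smoothFloor y = n := by
  rw [smoothFloor, Int.fract]
  rcases lt_or_ge y n with hyn | hny
  · have hfloor : ⌊y⌋ = n - 1 := Int.floor_eq_iff.2 (by push_cast; constructor <;> linarith [hy.1])
    rw [hfloor, smoothTransition.one_of_one_le (by push_cast; linarith [hy.1])]
    push_cast
    ring
  · have hfloor : ⌊y⌋ = n := Int.floor_eq_iff.2 ⟨hny, by linarith [hy.2]⟩
    rw [hfloor, smoothTransition.zero_of_nonpos (by linarith [hy.2]), add_zero]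

theorem contDiff_smoothFloor : ContDiff ℝ (⊤ : ℕ∞) smoothFloor := by
  refine contDiff_iff_contDiffAt.2 fun y => ?_
  rcases (Int.floor_le y).eq_or_lt with hy | hy
  · have hconst : smoothFloor =ᶠ[𝓝 y] fun _ => (⌊y⌋ : ℝ) := by
      filter_upwards [Icc_mem_nhds (show y - 1 / 4 < y by linarith)
        (show y < y + 1 / 2 by linarith)] with z hz
      exact smoothFloor_eq_intCast (by rwa [hy])
    exact contDiffAt_const.congr_of_eventuallyEq hconst
  · have hfloor : smoothFloor =ᶠ[𝓝 y] fun z => ⌊y⌋ + smoothTransition (4 * (z - ⌊y⌋) - 2) := by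
      filter_upwards [Ioo_mem_nhds hy (Int.lt_floor_add_one y)] with z hz
      rw [smoothFloor, Int.fract, Int.floor_eq_iff.2 ⟨hz.1.le, hz.2⟩]
    refine ContDiffAt.congr_of_eventuallyEq ?_ hfloor
    exact (contDiff_const.add (smoothTransition.contDiff.comp (by fun_prop))).contDiffAt

/-- The clock speed `2^z (1 + z²)^{q/2}` at the dyadic level `z`, that is at times `t` with
`1 - t ≈ 2^{-z}`. -/
noncomputable def levelSpeed (q z : ℝ) : ℝ := 2 ^ z * (1 + z ^ 2) ^ (q / 2)

/-- The derivative of the accelerating clock. Rounding the level makes it constant around every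
time `1 - 2^{-n}`. -/
noncomputable def clockSpeed (q t : ℝ) : ℝ := levelSpeed q (smoothFloor (-logb 2 (1 - t)))

/-- The accelerating diffeomorphism `σ` from `[0,1)` to `[0,∞)`. -/
noncomputable def clock (q t : ℝ) : ℝ := ∫ r in (0 : ℝ)..t, clockSpeed q r

variable {q t x y z : ℝ}

theorem levelSpeed_pos (q z : ℝ) : 0 < levelSpeed q z := by
  unfold levelSpeed
  positivity

theorem contDiff_levelSpeed (q : ℝ) : ContDiff ℝ (⊤ : ℕ∞) (levelSpeed q) :=
  (contDiff_const.rpow contDiff_id fun _ => two_ne_zero).mul <|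
    ContDiff.rpow_const_of_ne (by fun_prop) fun z => by positivity

theorem two_rpow_le_levelSpeed (hq : 0 ≤ q) (z : ℝ) : 2 ^ z ≤ levelSpeed q z :=
  le_mul_of_one_le_right (by positivity)
    (one_le_rpow (le_add_of_nonneg_right (sq_nonneg z)) (by positivity))

theorem levelSpeed_le (hq : 1 ≤ q) (hy : 0 ≤ y) (hz : 0 ≤ z) (hzy : z ≤ y + 1) :
    levelSpeed q z ≤ 2 * 2 ^ (q / 2) * 2 ^ (q - 1) * (2 ^ y * (y ^ q + 1)) := by
  have hexp : (2 : ℝ) ^ z ≤ 2 ^ y * 2 := by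
    rw [← rpow_add_one two_ne_zero]
    exact rpow_le_rpow_of_exponent_le one_le_two hzy
  have hpoly : (1 + z ^ 2) ^ (q / 2) ≤ 2 ^ (q / 2) * (y + 1) ^ q := by
    calc (1 + z ^ 2) ^ (q / 2) ≤ (2 * (y + 1) ^ 2) ^ (q / 2) :=
          rpow_le_rpow (by positivity) (by nlinarith) (by positivity)
      _ = 2 ^ (q / 2) * (y + 1) ^ q := by
          rw [mul_rpow zero_le_two (by positivity), ← rpow_natCast_mul (by positivity),
            Nat.cast_two, mul_div_cancel₀ q two_ne_zero]
  have hconvex : (y + 1) ^ q ≤ 2 ^ (q - 1) * (y ^ q + 1) := by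
    lift y to NNReal using hy
    have h := NNReal.rpow_add_le_mul_rpow_add_rpow y 1 hq
    rw [NNReal.one_rpow] at h
    exact_mod_cast h
  calc levelSpeed q z ≤ 2 ^ y * 2 * (2 ^ (q / 2) * (2 ^ (q - 1) * (y ^ q + 1))) :=
        mul_le_mul hexp (hpoly.trans (by gcongr)) (by positivity) (by positivity)
    _ = _ := by ring

theorem levelSpeed_natCast_mul_half_pow (q : ℝ) (n : ℕ) :
    levelSpeed q n * (1 / 2) ^ n = (1 + (n : ℝ) ^ 2) ^ (q / 2) := by
  rw [levelSpeed, rpow_natCast, mul_right_comm, ← mul_pow, mul_one_div_cancel two_ne_zero, one_pow,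
    one_mul]

theorem two_rpow_neg_logb (ht : t < 1) : (2 : ℝ) ^ (-logb 2 (1 - t)) = (1 - t)⁻¹ := by
  rw [rpow_neg zero_le_two, rpow_logb two_pos (by norm_num) (sub_pos.2 ht)]

theorem contDiffOn_clockSpeed (q : ℝ) : ContDiffOn ℝ (⊤ : ℕ∞) (clockSpeed q) (Iio 1) := by
  refine (contDiff_levelSpeed q).comp_contDiffOn (contDiff_smoothFloor.comp_contDiffOn ?_)
  exact ((ContDiffOn.log (by fun_prop) fun t ht => (sub_pos.2 ht).ne').div_const _).neg

theorem half_inv_le_clockSpeed (hq : 0 ≤ q) (ht : t < 1) : 1 / 2 * (1 - t)⁻¹ ≤ clockSpeed q t := by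
  have hfloor := floor_le_smoothFloor (-logb 2 (1 - t))
  calc 1 / 2 * (1 - t)⁻¹ = 2 ^ (-logb 2 (1 - t) - 1) := by
        rw [rpow_sub_one two_ne_zero, two_rpow_neg_logb ht]
        ring
    _ ≤ 2 ^ smoothFloor (-logb 2 (1 - t)) :=
        rpow_le_rpow_of_exponent_le one_le_two
          ((Int.sub_one_lt_floor _).le.trans hfloor)
    _ ≤ clockSpeed q t := two_rpow_le_levelSpeed hq _

theorem exists_clockSpeed_le (hq : 1 ≤ q) : ∃ C' > (0 : ℝ), ∀ t ∈ Ico (0 : ℝ) 1,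
    clockSpeed q t ≤ C' * (|logb 2 (1 - t)| ^ q + 1) / (1 - t) := by
  refine ⟨2 * 2 ^ (q / 2) * 2 ^ (q - 1), by positivity, fun t ht => ?_⟩
  have hlog : logb 2 (1 - t) ≤ 0 :=
    logb_nonpos one_lt_two (sub_nonneg.2 ht.2.le) (sub_le_self 1 ht.1)
  have hlevel : 0 ≤ smoothFloor (-logb 2 (1 - t)) :=
    (Int.cast_nonneg (Int.floor_nonneg.2 (neg_nonneg.2 hlog))).trans (floor_le_smoothFloor _)
  refine (levelSpeed_le hq (neg_nonneg.2 hlog) hlevel (smoothFloor_le_add_one _)).trans_eq ?_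
  rw [two_rpow_neg_logb ht.2, abs_of_nonpos hlog]
  ring

theorem neg_logb_mem_Icc {n : ℕ}
    (ht : t ∈ Icc (1 - 9 / 8 * (1 / 2) ^ n : ℝ) (1 - 3 / 4 * (1 / 2) ^ n)) :
    -logb 2 (1 - t) ∈ Icc (n - 1 / 4 : ℝ) (n + 1 / 2) := by
  have hn : (0 : ℝ) < (1 / 2) ^ n := by positivity
  have hlog : ∀ c : ℝ, 0 < c → logb 2 (c * (1 / 2) ^ n) = logb 2 c - n := fun c hc => by
    rw [logb_mul hc.ne' hn.ne', logb_pow, one_div, logb_inv, logb_self_eq_one one_lt_two]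
    ring
  have hupper := logb_le_logb_of_le one_lt_two (show 0 < 1 - t by linarith [ht.2])
    (show 1 - t ≤ 9 / 8 * (1 / 2) ^ n by linarith [ht.1])
  have hlower := logb_le_logb_of_le one_lt_two (show (0 : ℝ) < 3 / 4 * (1 / 2) ^ n by positivity)
    (show 3 / 4 * (1 / 2) ^ n ≤ 1 - t by linarith [ht.2])
  have hnine := logb_le_logb_of_le one_lt_two (show (0 : ℝ) < (9 / 8) ^ 4 by norm_num)
    (show (9 / 8 : ℝ) ^ 4 ≤ 2 by norm_num)
  have hthree := logb_le_logb_of_le one_lt_two (show (0 : ℝ) < 2⁻¹ by norm_num)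
    (show 2⁻¹ ≤ (3 / 4 : ℝ) ^ 2 by norm_num)
  rw [hlog _ (by norm_num)] at hupper hlower
  rw [logb_pow, logb_self_eq_one one_lt_two] at hnine
  rw [logb_pow, logb_inv, logb_self_eq_one one_lt_two] at hthree
  push_cast at hnine hthree
  constructor <;> linarith

theorem clockSpeed_eq_levelSpeed (q : ℝ) {n : ℕ}
    (ht : t ∈ Icc (1 - 9 / 8 * (1 / 2) ^ n : ℝ) (1 - 3 / 4 * (1 / 2) ^ n)) :
    clockSpeed q t = levelSpeed q n := by
  rw [clockSpeed, smoothFloor_eq_intCast (n := n) (by exact_mod_cast neg_logb_mem_Icc ht),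
    Int.cast_natCast]

theorem hasDerivAt_clock (q : ℝ) (ht : t < 1) : HasDerivAt (clock q) (clockSpeed q t) t := by
  have hcont := (contDiffOn_clockSpeed q).continuousOn
  have hsub : uIcc 0 t ⊆ Iio 1 := fun r hr => hr.2.trans_lt (max_lt one_pos ht)
  exact intervalIntegral.integral_hasDerivAt_right (hcont.mono hsub).intervalIntegrable
    (hcont.stronglyMeasurableAtFilter isOpen_Iio t ht) (hcont.continuousAt (Iio_mem_nhds ht))

theorem clock_zero (q : ℝ) : clock q 0 = 0 :=
  intervalIntegral.integral_same

theorem contDiffOn_clock (q : ℝ) : ContDiffOn ℝ (⊤ : ℕ∞) (clock q) (Iio 1) :=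
  (contDiffOn_infty_iff_deriv_of_isOpen isOpen_Iio).2
    ⟨fun _ ht => (hasDerivAt_clock q ht).differentiableAt.differentiableWithinAt,
      (contDiffOn_clockSpeed q).congr fun _ ht => (hasDerivAt_clock q ht).deriv⟩

theorem strictMonoOn_clock (q : ℝ) : StrictMonoOn (clock q) (Iio 1) := by
  refine strictMonoOn_of_deriv_pos (convex_Iio 1) (contDiffOn_clock q).continuousOn fun t ht => ?_
  rw [interior_Iio] at ht
  rw [(hasDerivAt_clock q ht).deriv]
  exact levelSpeed_pos q _

theorem clock_nonneg (q : ℝ) (ht : t ∈ Ico (0 : ℝ) 1) : 0 ≤ clock q t := by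
  simpa only [clock_zero] using (strictMonoOn_clock q).monotoneOn (mem_Iio.2 one_pos) ht.2 ht.1

theorem neg_half_log_le_clock (hq : 0 ≤ q) (ht : t ∈ Ico (0 : ℝ) 1) :
    -(1 / 2 * log (1 - t)) ≤ clock q t := by
  have hderiv : ∀ r < 1, HasDerivAt (fun r => clock q r + 1 / 2 * log (1 - r))
      (clockSpeed q r + 1 / 2 * (-1 / (1 - r))) r := fun r hr =>
    (hasDerivAt_clock q hr).add
      ((((hasDerivAt_id r).const_sub 1).log (sub_pos.2 hr).ne').const_mul (1 / 2))
  have hmono : MonotoneOn (fun r => clock q r + 1 / 2 * log (1 - r)) (Iio 1) := by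
    refine monotoneOn_of_hasDerivWithinAt_nonneg (convex_Iio 1)
      (fun r hr => (hderiv r hr).continuousAt.continuousWithinAt)
      (fun r hr => (hderiv r (interior_Iio.subset hr)).hasDerivWithinAt) fun r hr => ?_
    rw [interior_Iio] at hr
    have hspeed := half_inv_le_clockSpeed hq hr
    rw [neg_div, one_div (1 - r)]
    linarith
  have h := hmono (mem_Iio.2 one_pos) ht.2 ht.1
  simp only [clock_zero, sub_zero, log_one, mul_zero, add_zero] at h
  linarith

theorem bijOn_clock (hq : 0 ≤ q) : BijOn (clock q) (Ico 0 1) (Ici 0) := by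
  refine ⟨fun t ht => clock_nonneg q ht,
    ((strictMonoOn_clock q).mono Ico_subset_Iio_self).injOn, fun y hy => ?_⟩
  have hb : 1 - exp (-(2 * y)) ∈ Ico (0 : ℝ) 1 :=
    ⟨sub_nonneg.2 (exp_le_one_iff.2 (by linarith [mem_Ici.1 hy])), sub_lt_self 1 (exp_pos _)⟩
  have hyb : y ≤ clock q (1 - exp (-(2 * y))) := by
    have h := neg_half_log_le_clock hq hb
    rw [sub_sub_cancel, log_exp] at h
    linarith
  have hcont : ContinuousOn (clock q) (Icc 0 (1 - exp (-(2 * y)))) :=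
    (contDiffOn_clock q).continuousOn.mono fun t ht => ht.2.trans_lt hb.2
  obtain ⟨t, ht, rfl⟩ := intermediate_value_Icc hb.1 hcont ⟨by rwa [clock_zero], hyb⟩
  exact ⟨t, ⟨ht.1, ht.2.trans_lt hb.2⟩, rfl⟩

theorem clock_eq_affine (q : ℝ) {n : ℕ}
    (ht : t ∈ Icc (1 - 9 / 8 * (1 / 2) ^ n : ℝ) (1 - 3 / 4 * (1 / 2) ^ n)) :
    clock q t = clock q (1 - (1 / 2) ^ n) + levelSpeed q n * (t - (1 - (1 / 2) ^ n)) := by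
  have hn : (0 : ℝ) < (1 / 2) ^ n := by positivity
  have hderiv : ∀ r ∈ Icc (1 - 9 / 8 * (1 / 2) ^ n : ℝ) (1 - 3 / 4 * (1 / 2) ^ n),
      HasDerivAt (fun r => clock q r - levelSpeed q n * r) 0 r := fun r hr => by
    refine ((hasDerivAt_clock q (by linarith [hr.2])).sub
      ((hasDerivAt_id r).const_mul (levelSpeed q n))).congr_deriv ?_
    rw [clockSpeed_eq_levelSpeed q hr, mul_one, sub_self]
  have hconst := constant_of_has_deriv_right_zero
    (fun r hr => (hderiv r hr).continuousAt.continuousWithinAt)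
    fun r hr => (hderiv r (Ico_subset_Icc_self hr)).hasDerivWithinAt
  linarith [hconst t ht, hconst (1 - (1 / 2) ^ n) ⟨by linarith, by linarith⟩]

theorem log_levelSpeed (q z : ℝ) :
    log (levelSpeed q z) = z * log 2 + q / 2 * log (1 + z ^ 2) := by
  rw [levelSpeed, log_mul (by positivity) (by positivity), log_rpow two_pos,
    log_rpow (by positivity)]

theorem abs_log_div_levelSpeed_le (hq : 0 ≤ q) (hz : 1 ≤ z) {ν : ℝ} (hν : ν ≠ 0) :
    |log (ν / levelSpeed q z)| ≤ (|log ν| + 1 + q) * z := by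
  have hz₀ : 0 ≤ z := zero_le_one.trans hz
  have htwo : log 2 ≤ 1 := (log_le_sub_one_of_pos two_pos).trans_eq (by norm_num)
  have hsq : log (1 + z ^ 2) ≤ 2 * z :=
    calc log (1 + z ^ 2) ≤ log ((1 + z) ^ 2) := log_le_log (by positivity) (by nlinarith)
      _ = 2 * log (1 + z) := by rw [log_pow, Nat.cast_two]
      _ ≤ 2 * z := by linarith [log_le_sub_one_of_pos (show 0 < 1 + z by positivity)]
  have hspeed : |log (levelSpeed q z)| ≤ (1 + q) * z := by
    have hsq₀ : 0 ≤ log (1 + z ^ 2) := log_nonneg (le_add_of_nonneg_right (sq_nonneg z))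
    rw [log_levelSpeed, abs_of_nonneg (by positivity)]
    nlinarith [mul_le_mul_of_nonneg_left hsq hq, mul_le_mul_of_nonneg_left htwo hz₀]
  calc |log (ν / levelSpeed q z)| ≤ |log ν| + |log (levelSpeed q z)| := by
        rw [log_div hν (levelSpeed_pos q z).ne']
        exact abs_sub _ _
    _ ≤ |log ν| * z + (1 + q) * z :=
        add_le_add (le_mul_of_one_le_right (abs_nonneg _) hz) hspeed
    _ = (|log ν| + 1 + q) * z := by ring

theorem mul_rpow_le_one_add_sq_rpow {m : ℝ} (hm : 0 ≤ m) (hx : 1 ≤ x) :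
    x * x ^ m ≤ (1 + x ^ 2) ^ ((2 + m) / 2) := by
  have hx₀ : 0 < x := one_pos.trans_le hx
  calc x * x ^ m = x ^ (1 + m) := (rpow_one_add' hx₀.le (by positivity)).symm
    _ ≤ x ^ (2 + m) := rpow_le_rpow_of_exponent_le hx (by linarith)
    _ = (x ^ 2) ^ ((2 + m) / 2) := by
        rw [← rpow_natCast_mul hx₀.le, Nat.cast_two, mul_div_cancel₀ _ two_ne_zero]
    _ ≤ (1 + x ^ 2) ^ ((2 + m) / 2) :=
        rpow_le_rpow (by positivity) (le_add_of_nonneg_left zero_le_one) (by positivity)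

theorem eventually_dissipationTime_lt {τ : ℝ → ℝ} {C m ν : ℝ} (hC : 0 < C) (hm : 0 ≤ m)
    (hτ : ∀ κ, 0 < κ → κ ≤ 1 / C → τ κ ≤ C * |log κ| ^ m) (hν : 0 < ν) :
    ∀ᶠ n : ℕ in atTop, τ (ν / levelSpeed (2 + m) n) <
      levelSpeed (2 + m) n * (1 / 4 * (1 / 2) ^ n) := by
  set K := |log ν| + 1 + (2 + m)
  have hK : 0 ≤ K := by positivity
  have hpow : Tendsto (fun n : ℕ => (2 : ℝ) ^ n) atTop atTop :=
    tendsto_pow_atTop_atTop_of_one_lt one_lt_two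
  filter_upwards [hpow.eventually_ge_atTop (ν * C), eventually_ge_atTop 1,
    tendsto_natCast_atTop_atTop.eventually_gt_atTop (4 * (C * K ^ m))] with n hn_pow hn_one hn
  have hn₁ : (1 : ℝ) ≤ n := by exact_mod_cast hn_one
  have hspeed := levelSpeed_pos (2 + m) n
  have hsmall : ν / levelSpeed (2 + m) n ≤ 1 / C := by
    rw [div_le_div_iff₀ hspeed hC, one_mul]
    exact hn_pow.trans (by simpa only [rpow_natCast] using
      two_rpow_le_levelSpeed (by positivity) (n : ℝ))
  calc τ (ν / levelSpeed (2 + m) n)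
      ≤ C * |log (ν / levelSpeed (2 + m) n)| ^ m := hτ _ (div_pos hν hspeed) hsmall
    _ ≤ C * (K * n) ^ m := by
        gcongr
        exact abs_log_div_levelSpeed_le (by positivity) hn₁ hν.ne'
    _ = C * K ^ m * (n : ℝ) ^ m := by rw [mul_rpow hK (Nat.cast_nonneg n), mul_assoc]
    _ < 1 / 4 * n * (n : ℝ) ^ m := by
        exact mul_lt_mul_of_pos_right (by linarith) (by positivity)
    _ ≤ 1 / 4 * (1 + (n : ℝ) ^ 2) ^ ((2 + m) / 2) := by
        rw [mul_assoc]
        gcongr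
        exact mul_rpow_le_one_add_sq_rpow hm hn₁
    _ = levelSpeed (2 + m) n * (1 / 4 * (1 / 2) ^ n) := by
        rw [mul_left_comm, levelSpeed_natCast_mul_half_pow]

end Clock

/-! ### Total dissipation -/

section TotalDissipation

variable {s : ℝ}

theorem tendsto_zero_of_dyadic_halving {L : ℝ → ℝ} {N : ℕ} (hL : ∀ t, 0 ≤ L t)
    (hanti : AntitoneOn L (Ioo s 1)) (hN : ∀ n ≥ N, s < 1 - (1 / 2) ^ n)
    (hhalf : ∀ n ≥ N, L (1 - (1 / 2) ^ (n + 1)) ≤ 1 / 2 * L (1 - (1 / 2) ^ n)) :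
    Tendsto L (𝓝[<] 1) (𝓝 0) := by
  have hgeom : ∀ m, L (1 - (1 / 2) ^ (N + m)) ≤ (1 / 2) ^ m * L (1 - (1 / 2) ^ N) := fun m => by
    induction m with
    | zero => simp
    | succ m ih =>
      calc L (1 - (1 / 2) ^ (N + m + 1)) ≤ 1 / 2 * L (1 - (1 / 2) ^ (N + m)) :=
            hhalf (N + m) (Nat.le_add_right N m)
        _ ≤ 1 / 2 * ((1 / 2) ^ m * L (1 - (1 / 2) ^ N)) := by gcongr
        _ = (1 / 2) ^ (m + 1) * L (1 - (1 / 2) ^ N) := by ring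
  have hlim : Tendsto (fun m : ℕ => (1 / 2 : ℝ) ^ m * L (1 - (1 / 2) ^ N)) atTop (𝓝 0) := by
    simpa only [zero_mul] using
      (tendsto_pow_atTop_nhds_zero_of_lt_one (by norm_num : (0 : ℝ) ≤ 1 / 2)
        (by norm_num)).mul_const (L (1 - (1 / 2) ^ N))
  refine tendsto_order.2 ⟨fun ε hε => .of_forall fun t => hε.trans_le (hL t), fun ε hε => ?_⟩
  obtain ⟨m, hm⟩ := (hlim.eventually_lt_const hε).exists
  have hpow : (0 : ℝ) < (1 / 2) ^ (N + m) := by positivity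
  have hs := hN (N + m) (Nat.le_add_right N m)
  filter_upwards [Ioo_mem_nhdsLT (sub_lt_self 1 hpow)] with t ht
  exact ((hanti ⟨hs, sub_lt_self 1 hpow⟩ ⟨hs.trans ht.1, ht.2⟩ ht.1.le).trans (hgeom m)).trans_lt hm

variable {u : ℝ → (Fin d → ℝ) → Fin d → ℝ} {θ : ℝ → (Fin d → ℝ) → ℝ} {ν q T : ℝ}

theorem antitoneOn_L2norm_of_clock (hν : 0 ≤ ν) (hu : IncompressibleOn u (Ici 0)) (hs : 0 ≤ s)
    (hθ : IsSolution ν (accelerate (clock q) u) 0 (Ioo s 1) θ) :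
    AntitoneOn (fun t => L2norm d (θ t)) (Ioo s 1) :=
  hθ.antitoneOn_L2norm hν isOpen_Ioo (convex_Ioo s 1) <|
    hu.accelerate isOpen_Ioo ((contDiffOn_clock q).mono Ioo_subset_Iio_self)
      fun _ ht => clock_nonneg q ⟨hs.trans ht.1.le, ht.2⟩

theorem L2norm_halving_of_clock {n : ℕ} (hν : 0 < ν) (hu : IncompressibleOn u (Ici 0))
    (hT : IsDissipationTime u (ν / levelSpeed q n) T) (hT₀ : 0 ≤ T)
    (hT_lt : T < levelSpeed q n * (1 / 4 * (1 / 2) ^ n)) (hs : 0 ≤ s)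
    (hn : s < 1 - 9 / 8 * (1 / 2) ^ n)
    (hθ : IsSolution ν (accelerate (clock q) u) 0 (Ioo s 1) θ)
    (hmean : ∀ t ∈ Ioo s 1, ∫ x in unitCell d, θ t x = 0) :
    L2norm d (θ (1 - (1 / 2) ^ (n + 1))) ≤ 1 / 2 * L2norm d (θ (1 - (1 / 2) ^ n)) := by
  set P : ℝ := (1 / 2) ^ n
  have hP₀ : 0 < P := by positivity
  have hA := levelSpeed_pos q n
  have hwindow : Ioo (1 - P - 1 / 8 * P) (1 - P + 1 / 4 * P) ⊆ Ioo s 1 :=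
    Ioo_subset_Ioo (by linarith) (by linarith)
  have hstart : 0 ≤ clock q (1 - P) - levelSpeed q n * (1 / 8 * P) := by
    have h := clock_nonneg q (t := 1 - 9 / 8 * P) ⟨by linarith, by linarith⟩
    rw [clock_eq_affine q (n := n) ⟨le_rfl, by linarith⟩] at h
    linarith
  have hhalf := hT.halving_of_affine hν hT₀ hu hA (a := 1 / 8 * P) (by positivity)
    (fun t ht => clock_eq_affine q ⟨by linarith [ht.1], by linarith [ht.2]⟩) hstart hT_lt
    (hθ.mono isOpen_Ioo.uniqueDiffOn hwindow) fun t ht => hmean t (hwindow ht)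
  have hend : T / levelSpeed q n < 1 / 4 * P := (div_lt_iff₀' hA).2 hT_lt
  have hend₀ : 0 ≤ T / levelSpeed q n := div_nonneg hT₀ hA.le
  have hnext : (1 / 2 : ℝ) ^ (n + 1) = 1 / 2 * P := pow_succ' _ _
  exact (antitoneOn_L2norm_of_clock hν.le hu hs hθ ⟨by linarith, by linarith⟩
    ⟨by linarith, by linarith⟩ (by linarith)).trans hhalf

theorem tendsto_L2norm_of_clock {τ : ℝ → ℝ} {C m : ℝ} (hu : IncompressibleOn u (Ici 0))
    (hτ_pos : ∀ κ > 0, 0 < τ κ) (hτ : ∀ κ > 0, IsDissipationTime u κ (τ κ)) (hC : 0 < C)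
    (hm : 0 ≤ m) (hτ_log : ∀ κ, 0 < κ → κ ≤ 1 / C → τ κ ≤ C * |log κ| ^ m) (hν : 0 < ν)
    (hs : s ∈ Ico (0 : ℝ) 1) (hθ : IsSolution ν (accelerate (clock (2 + m)) u) 0 (Ioo s 1) θ)
    (hmean : ∀ t ∈ Ioo s 1, ∫ x in unitCell d, θ t x = 0) :
    Tendsto (fun t => L2norm d (θ t)) (𝓝[<] 1) (𝓝 0) := by
  have hpow : Tendsto (fun n : ℕ => 9 / 8 * (1 / 2 : ℝ) ^ n) atTop (𝓝 0) := by
    simpa only [mul_zero] using (tendsto_pow_atTop_nhds_zero_of_lt_one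
      (by norm_num : (0 : ℝ) ≤ 1 / 2) (by norm_num)).const_mul (9 / 8)
  obtain ⟨N, hN⟩ := eventually_atTop.1 ((eventually_dissipationTime_lt hC hm hτ_log hν).and
    (hpow.eventually_lt_const (sub_pos.2 hs.2)))
  refine tendsto_zero_of_dyadic_halving (N := N) (fun t => sqrt_nonneg _)
    (antitoneOn_L2norm_of_clock hν.le hu hs.1 hθ) (fun n hn => ?_) fun n hn => ?_
  · linarith [(hN n hn).2, show (0 : ℝ) < (1 / 2) ^ n by positivity]
  · have hκ := div_pos hν (levelSpeed_pos (2 + m) n)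
    exact L2norm_halving_of_clock hν hu (hτ _ hκ) (hτ_pos _ hκ).le (hN n hn).1 hs.1
      (by linarith [(hN n hn).2]) hθ hmean

end TotalDissipation

end Development

/-- For flows whose dissipation time satisfies a logarithmic bound (e.g. exponentially
mixing flows), the accelerating diffeomorphism can be chosen with an explicit
polynomial-logarithmic derivative bound. -/
theorem accelerated_total_dissipation_exponential_mixing_bound
    (d : ℕ) (hd : 1 ≤ d)
    (u : ℝ → (Fin d → ℝ) → (Fin d → ℝ))
    (hu_smooth : ContDiffOn ℝ (⊤ : ℕ∞) (fun p : ℝ × (Fin d → ℝ) => u p.1 p.2)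
      (Set.Ici (0:ℝ) ×ˢ Set.univ))
    (hu_per : ∀ t ∈ Set.Ici (0:ℝ), ∀ i : Fin d, PeriodicIn d (fun x => u t x i))
    (hu_bdd : ∀ T > (0:ℝ), ∃ M : ℝ, ∀ t ∈ Set.Icc (0:ℝ) T, ∀ x, ‖u t x‖ ≤ M)
    (hu_div : ∀ t ∈ Set.Ici (0:ℝ), ∀ x, ∑ i, pd d i (fun y => u t y i) x = 0)
    (τ : ℝ → ℝ) (hτ_pos : ∀ ν > (0:ℝ), 0 < τ ν)
    (C p : ℝ) (hC : 0 < C) (hp : 0 < p)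
    (hτ_log : ∀ ν : ℝ, 0 < ν → ν ≤ 1 / C → τ ν ≤ C * |Real.log ν| ^ ((2:ℝ)/p))
    (hRE : ∀ ν > (0:ℝ), ∀ s ≥ (0:ℝ), ∀ θ : ℝ → (Fin d → ℝ) → ℝ,
      ContDiffOn ℝ (⊤ : ℕ∞) (fun p : ℝ × (Fin d → ℝ) => θ p.1 p.2) (Set.Ici s ×ˢ Set.univ) →
      (∀ t ∈ Set.Ici s, PeriodicIn d (θ t)) →
      (∀ t ∈ Set.Ici s, ∫ x in Set.Icc (0 : Fin d → ℝ) 1, θ t x = 0) →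
      (∀ t ∈ Set.Ici s, ∀ x,
        derivWithin (fun r => θ r x) (Set.Ici s) t - ν * lap d (θ t) x
          + ∑ i, u t x i * pd d i (θ t) x = 0) →
      L2norm d (θ (s + τ ν)) ≤ (1/2) * L2norm d (θ s)) :
    ∃ σ : ℝ → ℝ,
      ContDiffOn ℝ (⊤ : ℕ∞) σ (Set.Ico 0 1) ∧
      StrictMonoOn σ (Set.Ico 0 1) ∧
      Set.BijOn σ (Set.Ico 0 1) (Set.Ici 0) ∧
      (∃ C' > (0:ℝ), ∀ t ∈ Set.Ico (0:ℝ) 1, deriv σ t ≤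
        C' * (|Real.logb 2 (1 - t)| ^ (2 + (2:ℝ)/p) + 1) / (1 - t)) ∧
      ∀ ν > (0:ℝ), ∀ s ∈ Set.Ico (0:ℝ) 1, ∀ θ : ℝ → (Fin d → ℝ) → ℝ,
        ContDiffOn ℝ (⊤ : ℕ∞) (fun p : ℝ × (Fin d → ℝ) => θ p.1 p.2) (Set.Ico s 1 ×ˢ Set.univ) →
        (∀ t ∈ Set.Ico s 1, PeriodicIn d (θ t)) →
        (∀ t ∈ Set.Ico s 1, ∫ x in Set.Icc (0 : Fin d → ℝ) 1, θ t x = 0) →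
        (∀ t ∈ Set.Ico s 1, ∀ x,
          derivWithin (fun r => θ r x) (Set.Ico s 1) t - ν * lap d (θ t) x
            + ∑ i, (deriv σ t * u (σ t) x i) * pd d i (θ t) x = 0) →
        Tendsto (fun t => L2norm d (θ t)) (nhdsWithin 1 (Set.Iio 1)) (nhds 0) := by
  have hu : IncompressibleOn u (Set.Ici 0) := ⟨hu_smooth, hu_per, hu_div⟩
  have hτ : ∀ κ > 0, IsDissipationTime u κ (τ κ) := fun κ hκ s hs θ hθ hmean =>
    hRE κ hκ s hs θ hθ.contDiffOn hθ.periodic hmean hθ.equation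
  obtain ⟨C', hC', hspeed⟩ :=
    exists_clockSpeed_le (q := 2 + 2 / p) (by linarith [div_pos two_pos hp])
  refine ⟨clock (2 + 2 / p), (contDiffOn_clock _).mono Set.Ico_subset_Iio_self,
    (strictMonoOn_clock _).mono Set.Ico_subset_Iio_self, bijOn_clock (by positivity),
    ⟨C', hC', fun t ht => (hasDerivAt_clock _ ht.2).deriv.trans_le (hspeed t ht)⟩, ?_⟩
  intro ν hν s hs θ hθ_smooth hθ_per hθ_mean hθ_eq
  have hθ : IsSolution ν (accelerate (clock (2 + 2 / p)) u) 0 (Set.Ico s 1) θ :=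
    ⟨hθ_smooth, hθ_per, hθ_eq⟩
  exact tendsto_L2norm_of_clock hu hτ_pos hτ hC (by positivity) hτ_log hν hs
    (hθ.mono isOpen_Ioo.uniqueDiffOn Set.Ioo_subset_Ico_self)
    fun t ht => hθ_mean t (Set.Ioo_subset_Ico_self ht)
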